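/- arXiv:1404.0464 — 9 statements merged into one kernel-verified Lean document; each statement's English description precedes it below -/
import Mathlib

section
/- Let A be an associative algebra over a field F, let q₁, q₂, q₃ be nonzero elements of F, and let A, B, C ∈ A. Then the q-Jacobi identity holds: [A,[B,C]_{(q₁,q₁⁻¹)}]_{(q₃q₂⁻¹,q₂q₃⁻¹)} + [B,[C,A]_{(q₂,q₂⁻¹)}]_{(q₁q₃⁻¹,q₃q₁⁻¹)} + [C,[A,B]_{(q₃,q₃⁻¹)}]_{(q₂q₁⁻¹,q₁q₂⁻¹)} = 0. -/
/-- The deformed commutator `[x,y]_{(u,v)} = u • (x*y) - v • (y*x)`. -/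
def dcomm {F 𝔸 : Type*} [CommSemiring F] [Ring 𝔸] [Algebra F 𝔸] (u v : F) (x y : 𝔸) : 𝔸 :=
  u • (x * y) - v • (y * x)

section Deformed

variable {F 𝔸 : Type*} [CommSemiring F] [Ring 𝔸] [Algebra F 𝔸]

/-- The deformed Jordan triple product `{x,y,z}_{(a,b)}`, in which nested deformed commutators are
expanded; `a = b = 1` gives the usual triple product (without the factor `1/2`). -/
def dtriple (a b : F) (x y z : 𝔸) : 𝔸 :=
  a • (x * y * z) + b • (z * y * x)

theorem dcomm_dcomm_right (u v s t : F) (x y z : 𝔸) :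
    dcomm u v x (dcomm s t y z) =
      dtriple (u * s) (v * t) x y z - dtriple (v * s) (u * t) y z x := by
  simp only [dcomm, dtriple, mul_sub, sub_mul, smul_sub, mul_smul_comm, smul_mul_assoc, smul_smul,
    mul_assoc]
  abel

-- The rotations `x → y → z → x` and `1 → 2 → 3 → 1` carry the first triple product to the second,
-- so the sum of this identity over its three rotations telescopes.
theorem dcomm_dcomm_eq_dtriple_sub_rotate (u₁ u₂ u₃ v₁ v₂ v₃ : F) (x y z : 𝔸) :
    dcomm (u₃ * v₂) (u₂ * v₃) x (dcomm u₁ v₁ y z) =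
      dtriple (u₁ * v₂ * u₃) (v₁ * u₂ * v₃) x y z
        - dtriple (u₂ * v₃ * u₁) (v₂ * u₃ * v₁) y z x := by
  rw [dcomm_dcomm_right]
  congr 2 <;> ring

theorem stmt0_general (u₁ u₂ u₃ v₁ v₂ v₃ : F) (A B C : 𝔸) :
    dcomm (u₃ * v₂) (u₂ * v₃) A (dcomm u₁ v₁ B C)
      + dcomm (u₁ * v₃) (u₃ * v₁) B (dcomm u₂ v₂ C A)
      + dcomm (u₂ * v₁) (u₁ * v₂) C (dcomm u₃ v₃ A B) = 0 := by
  rw [dcomm_dcomm_eq_dtriple_sub_rotate u₁ u₂ u₃, dcomm_dcomm_eq_dtriple_sub_rotate u₂ u₃ u₁,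
    dcomm_dcomm_eq_dtriple_sub_rotate u₃ u₁ u₂, sub_add_sub_cancel, sub_add_sub_cancel, sub_self]

end Deformed

/-- the q-Jacobi identity for the deformed commutator in an associative
algebra over a field. -/
theorem stmt0 {F 𝔸 : Type*} [Field F] [Ring 𝔸] [Algebra F 𝔸]
    (q₁ q₂ q₃ : F) (h₁ : q₁ ≠ 0) (h₂ : q₂ ≠ 0) (h₃ : q₃ ≠ 0) (A B C : 𝔸) :
    dcomm (q₃ * q₂⁻¹) (q₂ * q₃⁻¹) A (dcomm q₁ q₁⁻¹ B C)
      + dcomm (q₁ * q₃⁻¹) (q₃ * q₁⁻¹) B (dcomm q₂ q₂⁻¹ C A)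
      + dcomm (q₂ * q₁⁻¹) (q₁ * q₂⁻¹) C (dcomm q₃ q₃⁻¹ A B) = 0 :=
  stmt0_general q₁ q₂ q₃ q₁⁻¹ q₂⁻¹ q₃⁻¹ A B C
end

section
/- For all m, n ∈ ℤ, the operators L_m satisfy the q-deformed Virasoro–Witt algebra relation: q^{m−n}·(L_m ∘ L_n) − q^{n−m}·(L_n ∘ L_m) = [m−n]·L_{m+n} as ℂ-linear operators on V. -/
open scoped BigOperators

/-- The q-number `[x] = (q^x - q^{-x})/(q - q⁻¹)`. -/
noncomputable def qnum (q : ℂ) (x : ℤ) : ℂ := (q ^ x - q ^ (-x)) / (q - q⁻¹)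

/-- The operator `L_m = -q^N (a†)^{m+1} a` on `V = ℤ →₀ ℂ`,
determined by `L_m e_k = -[k] q^{k+m} e_{k+m}`. -/
noncomputable def Lop (q : ℂ) (m : ℤ) : Module.End ℂ (ℤ →₀ ℂ) :=
  Finsupp.lsum ℂ fun k : ℤ => (-(qnum q k) * q ^ (k + m)) • Finsupp.lsingle (k + m)

/-! On `e_k`, both `q^{m-n} L_m L_n` and `q^{n-m} L_n L_m` carry the common factor
`[k] q^{k+m+n}`; what is left of their difference is `q^{k+m} [k+n] - q^{k+n} [k+m]`, which equals
`-[m-n]` by the subtraction formula `[x-y] = q^y [x] - q^x [y]` for q-numbers. -/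

theorem qnum_sub {q : ℂ} (hq : q ≠ 0) (x y : ℤ) :
    qnum q (x - y) = q ^ y * qnum q x - q ^ x * qnum q y := by
  have cross_terms : q ^ (x - y) - q ^ (-(x - y)) =
      q ^ y * (q ^ x - q ^ (-x)) - q ^ x * (q ^ y - q ^ (-y)) := by
    rw [neg_sub, sub_eq_add_neg x, sub_eq_add_neg y, zpow_add₀ hq, zpow_add₀ hq]
    ring
  rw [qnum, cross_terms, sub_div, mul_div_assoc, mul_div_assoc, qnum, qnum]

theorem Lop_single (q : ℂ) (m k : ℤ) (c : ℂ) :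
    Lop q m (Finsupp.single k c) =
      Finsupp.single (k + m) (-(qnum q k) * q ^ (k + m) * c) := by
  simp [Lop]

theorem Lop_mul_Lop_single (q : ℂ) (m n k : ℤ) (c : ℂ) :
    (Lop q m * Lop q n) (Finsupp.single k c) =
      Finsupp.single (k + (m + n))
        (qnum q k * q ^ (k + (m + n)) * (q ^ (k + n) * qnum q (k + n)) * c) := by
  rw [Module.End.mul_apply, Lop_single, Lop_single, add_assoc, add_comm n m]
  congr 1
  ring

theorem zpow_smul_Lop_mul_Lop_single {q : ℂ} (hq : q ≠ 0) (m n k : ℤ) (c : ℂ) :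
    (q ^ (m - n) • (Lop q m * Lop q n)) (Finsupp.single k c) =
      Finsupp.single (k + (m + n))
        (qnum q k * q ^ (k + (m + n)) * (q ^ (k + m) * qnum q (k + n)) * c) := by
  have shift_exponent : q ^ (k + m) = q ^ (m - n) * q ^ (k + n) := by
    rw [← zpow_add₀ hq]
    congr 1
    ring
  rw [LinearMap.smul_apply, Lop_mul_Lop_single, Finsupp.smul_single, smul_eq_mul, shift_exponent]
  congr 1
  ring

/-- the q-deformed Virasoro–Witt algebra relation
`q^{m-n} L_m L_n - q^{n-m} L_n L_m = [m-n] L_{m+n}`. -/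
theorem stmt1 (q : ℂ) (hq : q ≠ 0) (hq2 : q ^ 2 ≠ 1) (m n : ℤ) :
    q ^ (m - n) • (Lop q m * Lop q n) - q ^ (n - m) • (Lop q n * Lop q m)
      = qnum q (m - n) • Lop q (m + n) := by
  refine Finsupp.lhom_ext fun k c => ?_
  have bracket : qnum q (m - n) =
      q ^ (k + n) * qnum q (k + m) - q ^ (k + m) * qnum q (k + n) := by
    rw [← qnum_sub hq, add_sub_add_left_eq_sub]
  rw [LinearMap.sub_apply, zpow_smul_Lop_mul_Lop_single hq, zpow_smul_Lop_mul_Lop_single hq,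
    add_comm n m, ← Finsupp.single_sub, LinearMap.smul_apply, Lop_single, Finsupp.smul_single,
    smul_eq_mul, bracket]
  congr 1
  ring
end

section
/- For every n ≥ 3 and all k₁,…,k_{2n−1} ∈ ℤ, the fully antisymmetrized sh-Jacobi sum of the q-deformed Virasoro–Witt n-algebra structure constants vanishes: Σ_{σ∈S_{2n−1}} sgn(σ)·f_n(k_{σ(1)},…,k_{σ(n)})·f_n(k_{σ(1)}+⋯+k_{σ(n)}, k_{σ(n+1)},…,k_{σ(2n−1)}) = 0. Consequently the n-linear bracket ⟦L_{i₁},…,L_{i_n}⟧ = f_n(i₁,…,i_n)·L_{i₁+⋯+i_n} on the free ℂ-module with basis (L_i)_{i∈ℤ} satisfies the sh-Jacobi identity, i.e. the q-deformed Virasoro–Witt n-algebra is a sh-n-Lie algebra. -/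
/-- The structure constants `f_n(i₁,…,i_n) = s(n)·(q-q⁻¹)^{-(n-1)}·det M`,
`M_{r,j} = q^{2(r - ⌊(n-1)/2⌋) i_j}`. -/
noncomputable def fVW (q : ℂ) (n : ℕ) (i : Fin n → ℤ) : ℂ :=
  (if n % 4 = 0 ∨ n % 4 = 1 then (1 : ℂ) else -1) * (q - q⁻¹) ^ (1 - (n : ℤ)) *
    Matrix.det (Matrix.of fun r j : Fin n =>
      q ^ (2 * ((r : ℤ) - (((n - 1) / 2 : ℕ) : ℤ)) * i j))

/-!
The determinant in `f_n` is the alternant `det (χ_r (i_j))` of the characters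
`χ_r i = q ^ (2 (r - ⌊(n-1)/2⌋) i)` of `ℤ`. Expand both alternants in the sh-Jacobi sum over
permutations `τ₁`, `τ₂`. Since a character turns the sum `k_{σ(1)} + ⋯ + k_{σ(n)}` into a product,
for fixed `τ₁`, `τ₂` the signed sum over `σ` is again an alternant, now of the `2n - 1` characters
`χ_{τ₁ i} χ_c` (for `i = 1, …, n`) and `χ_b` (for `b ≠ c`), where `c = τ₂ 1`. It vanishes as soon as
two of these agree, that is, as soon as `χ_a χ_c = χ_b` for some `a` and some `b ≠ c`. The exponents
`r - ⌊(n-1)/2⌋` include `1` and `-1` when `n ≥ 3`, so every exponent has a neighbour `b`.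
-/

section Alternant

variable {ι A R : Type*} [Fintype ι] [DecidableEq ι] [AddMonoid A] [CommRing R]

/-- The alternant `det (χ r (x j))` of a family of characters `χ`, which generalizes the determinant
in `fVW`. -/
def alternant (χ : ι → AddChar A R) (x : ι → A) : R :=
  (Matrix.of fun r j => χ r (x j)).det

theorem alternant_eq_sum_sign_mul_prod (χ : ι → AddChar A R) (x : ι → A) :
    alternant χ x = ∑ τ : Equiv.Perm ι, ((Equiv.Perm.sign τ : ℤ) : R) * ∏ j, χ (τ j) (x j) :=
  Matrix.det_apply' _

theorem alternant_eq_sum_sign_mul_prod_perm (χ : ι → AddChar A R) (x : ι → A) :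
    alternant χ x = ∑ σ : Equiv.Perm ι, ((Equiv.Perm.sign σ : ℤ) : R) * ∏ r, χ r (x (σ r)) := by
  rw [alternant, ← Matrix.det_transpose, Matrix.det_apply']
  rfl

theorem alternant_eq_zero_of_eq {χ : ι → AddChar A R} {r s : ι} (hrs : r ≠ s) (h : χ r = χ s)
    (x : ι → A) : alternant χ x = 0 :=
  Matrix.det_zero_of_row_eq hrs (by ext j; simp [h])

theorem alternant_append_mul_eq_zero {m k : ℕ} {χ : Fin m → AddChar A R}
    {ψ : Fin (k + 1) → AddChar A R} {a : Fin m} {b : Fin (k + 1)} (hb : b ≠ 0)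
    (hab : χ a * ψ 0 = ψ b) (x : Fin (m + k) → A) :
    alternant (Fin.append (fun i => χ i * ψ 0) fun j => ψ j.succ) x = 0 := by
  obtain ⟨j, rfl⟩ := Fin.exists_succ_eq_of_ne_zero hb
  have hne : Fin.castAdd k a ≠ Fin.natAdd m j := by
    simp only [ne_eq, Fin.ext_iff, Fin.val_castAdd, Fin.val_natAdd]
    lia
  exact alternant_eq_zero_of_eq hne (by simpa using hab) x

end Alternant

section AddChar

variable {A M : Type*} [AddCommMonoid A] [CommMonoid M]

theorem addChar_sum_eq_prod {ι : Type*} (ψ : AddChar A M) (s : Finset ι) (x : ι → A) :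
    ψ (∑ i ∈ s, x i) = ∏ i ∈ s, ψ (x i) :=
  map_sum ψ.toAddMonoidHom x s

theorem prod_addChar_mul_prod_addChar_cons_sum {m k : ℕ} (χ : Fin m → AddChar A M)
    (ψ : Fin (k + 1) → AddChar A M) (z : Fin (m + k) → A) :
    (∏ i, χ i (z (Fin.castAdd k i))) *
        ∏ j, ψ j (Fin.cons (α := fun _ => A) (∑ i, z (Fin.castAdd k i))
          (fun j => z (Fin.natAdd m j)) j) =
      ∏ p, Fin.append (fun i => χ i * ψ 0) (fun j => ψ j.succ) p (z p) := by
  simp only [Fin.prod_univ_succ, Fin.cons_zero, Fin.cons_succ, addChar_sum_eq_prod,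
    Fin.prod_univ_add, Fin.append_left, Fin.append_right, AddChar.mul_apply,
    Finset.prod_mul_distrib, mul_assoc]

end AddChar

section Jacobi

variable {A R : Type*} [AddCommMonoid A] [CommRing R] {m k : ℕ}

theorem sum_sign_mul_prod_mul_prod_cons_sum_eq_zero {χ : Fin m → AddChar A R}
    {ψ : Fin (k + 1) → AddChar A R} {a : Fin m} {b : Fin (k + 1)} (hb : b ≠ 0)
    (hab : χ a * ψ 0 = ψ b) (x : Fin (m + k) → A) :
    ∑ σ : Equiv.Perm (Fin (m + k)), ((Equiv.Perm.sign σ : ℤ) : R) *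
      ((∏ i, χ i (x (σ (Fin.castAdd k i)))) *
        ∏ j, ψ j (Fin.cons (α := fun _ => A) (∑ i, x (σ (Fin.castAdd k i)))
          (fun j => x (σ (Fin.natAdd m j))) j)) = 0 := by
  rw [← alternant_append_mul_eq_zero hb hab x, alternant_eq_sum_sign_mul_prod_perm]
  exact Finset.sum_congr rfl fun σ _ =>
    congrArg _ (prod_addChar_mul_prod_addChar_cons_sum χ ψ (x ∘ σ))

theorem sum_sign_mul_alternant_mul_alternant_cons_sum_eq_zero {N : ℕ} (hN : m + k = N)
    {χ : Fin m → AddChar A R} {ψ : Fin (k + 1) → AddChar A R}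
    (hχψ : ∀ c, ∃ a, ∃ b ≠ c, χ a * ψ c = ψ b) (x : Fin N → A) :
    ∑ σ : Equiv.Perm (Fin N), ((Equiv.Perm.sign σ : ℤ) : R) *
      (alternant χ (fun i => x (σ (Fin.cast hN (Fin.castAdd k i)))) *
        alternant ψ (Fin.cons (∑ i, x (σ (Fin.cast hN (Fin.castAdd k i))))
          fun j => x (σ (Fin.cast hN (Fin.natAdd m j))))) = 0 := by
  subst hN
  simp only [Fin.cast_refl, id_eq, alternant_eq_sum_sign_mul_prod, Finset.sum_mul, Finset.mul_sum]
  rw [Finset.sum_comm]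
  refine Finset.sum_eq_zero fun τ₂ _ => ?_
  rw [Finset.sum_comm]
  refine Finset.sum_eq_zero fun τ₁ _ => ?_
  obtain ⟨a, b, hb, hab⟩ := hχψ (τ₂ 0)
  obtain ⟨i, rfl⟩ := τ₁.surjective a
  obtain ⟨j, rfl⟩ := τ₂.surjective b
  have signed_sum_eq_zero := sum_sign_mul_prod_mul_prod_cons_sum_eq_zero
    (χ := fun i => χ (τ₁ i)) (ψ := fun j => ψ (τ₂ j)) (τ₂.injective.ne_iff.mp hb) hab x
  rw [← mul_zero (((Equiv.Perm.sign τ₁ : ℤ) : R) * ((Equiv.Perm.sign τ₂ : ℤ) : R)),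
    ← signed_sum_eq_zero, Finset.mul_sum]
  exact Finset.sum_congr rfl fun σ _ => by ring

/-- The sh-Jacobi sum of the structure constants `f` of an `n`-ary bracket
`⟦L_{i₁},…,L_{i_n}⟧ = f(i₁,…,i_n) L_{i₁+⋯+i_n}`: the coefficient of `L_{K 0 + ⋯ + K (2n-2)}` in the
antisymmetrized nested bracket. -/
def shJacobiSum {n : ℕ} (f : (Fin n → A) → R) (K : Fin (2 * n - 1) → A) : R :=
  ∑ σ : Equiv.Perm (Fin (2 * n - 1)), ((Equiv.Perm.sign σ : ℤ) : R) *
    (f (fun j => K (σ (Fin.castLE (by lia) j))) *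
      f (fun j => if (j : ℕ) = 0
        then ∑ t : Fin n, K (σ (Fin.castLE (by lia) t))
        else K (σ ⟨n + (j : ℕ) - 1, by lia⟩)))

theorem shJacobiSum_smul {n : ℕ} (c : R) (f : (Fin n → A) → R) (K : Fin (2 * n - 1) → A) :
    shJacobiSum (c • f) K = c ^ 2 * shJacobiSum f K := by
  simp only [shJacobiSum, Pi.smul_apply, smul_eq_mul, Finset.mul_sum]
  exact Finset.sum_congr rfl fun σ _ => by ring

theorem stmt7_general {n : ℕ} [NeZero n] (χ : Fin n → AddChar A R)
    (hχ : ∀ c, ∃ a, ∃ b ≠ c, χ a * χ c = χ b) (K : Fin (2 * n - 1) → A) :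
    shJacobiSum (alternant χ) K = 0 := by
  obtain ⟨k, rfl⟩ := Nat.exists_eq_succ_of_ne_zero (NeZero.ne n)
  rw [← sum_sign_mul_alternant_mul_alternant_cons_sum_eq_zero (by lia) hχ K]
  refine Finset.sum_congr rfl fun σ _ => congrArg _ (congrArg _ (congrArg _ (funext fun j => ?_)))
  cases j using Fin.cases <;> rfl

end Jacobi

/-- The character `i ↦ u ^ (e * i)` of `ℤ`, which gives the entries of the determinant in
`fVW`; `u` is a unit so that negative exponents make sense. -/
def zpowChar {M : Type*} [Monoid M] (u : Mˣ) (e : ℤ) : AddChar ℤ M where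
  toFun i := ↑(u ^ (e * i))
  map_zero_eq_one' := by simp
  map_add_eq_mul' i j := by rw [mul_add, zpow_add, Units.val_mul]

theorem zpowChar_mul_zpowChar {M : Type*} [CommMonoid M] (u : Mˣ) (d e : ℤ) :
    zpowChar u d * zpowChar u e = zpowChar u (d + e) := by
  ext i
  simp [zpowChar, add_mul, zpow_add]

theorem fVW_eq_smul_alternant {q : ℂ} (hq : q ≠ 0) (n : ℕ) :
    fVW q n =
      ((if n % 4 = 0 ∨ n % 4 = 1 then (1 : ℂ) else -1) * (q - q⁻¹) ^ (1 - (n : ℤ))) •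
        alternant fun r : Fin n =>
          zpowChar (Units.mk0 q hq) (2 * ((r : ℤ) - (((n - 1) / 2 : ℕ) : ℤ))) := by
  ext i
  simp [fVW, alternant, zpowChar]

theorem exists_ne_sub_add_sub_eq_sub {n m : ℕ} (hm : 0 < m) (hmn : m + 1 < n) (c : Fin n) :
    ∃ a : Fin n, ∃ b ≠ c, ((a : ℤ) - m) + ((c : ℤ) - m) = (b : ℤ) - m := by
  by_cases hc : (c : ℕ) + 1 < n
  · refine ⟨⟨m + 1, hmn⟩, ⟨c + 1, hc⟩, by simp [Fin.ext_iff], ?_⟩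
    push_cast
    ring
  · refine ⟨⟨m - 1, by lia⟩, ⟨c - 1, by lia⟩, ?_, ?_⟩
    · rw [ne_eq, Fin.ext_iff]
      lia
    · lia

theorem exists_ne_zpowChar_mul_eq {M : Type*} [CommMonoid M] (u : Mˣ) {n m : ℕ} (hm : 0 < m)
    (hmn : m + 1 < n) (c : Fin n) :
    ∃ a : Fin n, ∃ b ≠ c, zpowChar u (2 * ((a : ℤ) - m)) * zpowChar u (2 * ((c : ℤ) - m)) =
      zpowChar u (2 * ((b : ℤ) - m)) := by
  obtain ⟨a, b, hbc, hab⟩ := exists_ne_sub_add_sub_eq_sub hm hmn c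
  exact ⟨a, b, hbc, by rw [zpowChar_mul_zpowChar, ← mul_add, hab]⟩

/-- for every `n ≥ 3` the fully antisymmetrized sh-Jacobi sum of the
structure constants of the q-deformed Virasoro–Witt n-algebra vanishes, i.e. the
q-deformed Virasoro–Witt n-algebra is a sh-n-Lie algebra. -/
theorem stmt7 (q : ℂ) (hq : q ≠ 0) (hq2 : q ^ 2 ≠ 1) (n : ℕ) (hn : 3 ≤ n)
    (K : Fin (2 * n - 1) → ℤ) :
    ∑ σ : Equiv.Perm (Fin (2 * n - 1)), ((Equiv.Perm.sign σ : ℤ) : ℂ) *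
      (fVW q n (fun j => K (σ (Fin.castLE (by omega) j))) *
        fVW q n (fun j => if (j : ℕ) = 0
          then ∑ t : Fin n, K (σ (Fin.castLE (by omega) t))
          else K (σ ⟨n + (j : ℕ) - 1, by have := j.isLt; omega⟩))) = 0 := by
  have : NeZero n := ⟨by lia⟩
  change shJacobiSum (fVW q n) K = 0
  rw [fVW_eq_smul_alternant hq, shJacobiSum_smul,
    stmt7_general _ (exists_ne_zpowChar_mul_eq _ (by lia) (by lia)), mul_zero]
end

section
/- For every n ≥ 2 and all i₁,…,i_n ∈ ℤ², the n-bracket of the generators T closes: [T_{i₁},…,T_{i_n}] = (Σ_{σ∈S_n} sgn(σ)·p^{Σ_{1≤s<k≤n} i_{σ(k)}∧i_{σ(s)}})·T_{i₁+⋯+i_n}. -/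
/-- The wedge `m∧n = m₁n₂ - m₂n₁` on ℤ². -/
def wedge (m n : ℤ × ℤ) : ℤ := m.1 * n.2 - m.2 * n.1

/-- The recursively defined n-bracket in an associative ring (with fuel parameter):
`[A₁] = A₁` and `[A₁,…,A_n] = Σ_{s=1}^{n} (-1)^{s+1} A_s·[A₁,…,Â_s,…,A_n]`. -/
def nbrAux {R : Type*} [Ring R] : ℕ → List R → R
  | 0, _ => 0
  | _ + 1, [] => 0
  | _ + 1, [a] => a
  | fuel + 1, l => ∑ s ∈ Finset.range l.length,
      (-1 : R) ^ s * (l.getD s 0 * nbrAux fuel (l.eraseIdx s))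

/-- The n-bracket `[A₁,…,A_n]`. -/
def nbr {R : Type*} [Ring R] (l : List R) : R := nbrAux l.length l

/-!
The recursion for the `n`-bracket is the Laplace expansion of the antisymmetrised product:
sorting the permutations `σ` of `{0, …, n}` by `s = σ 0` gives
`[A₀,…,Aₙ] = Σ_σ sgn(σ) A_{σ(0)} ⋯ A_{σ(n)}` in any ring. If moreover
`T m * T n = χ m n • T (m + n)` with each `χ m` a character, every product of generators collapses
to a scalar multiple of a single generator, with one factor `χ` for each pair of positions. That
generator has index `Σ i_j` whatever the order of the factors, so it comes out of the sum over `σ`.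
-/

open Equiv (Perm)

section ConsPerm

variable {n : ℕ}

/-- The permutation of `Fin (n + 1)` whose list of values is `s` followed by that of `τ`, with the
values of `τ` relabelled by the increasing bijection from `Fin n` onto the complement of `s`. It
indexes the terms of a Laplace expansion. The definition through `Fin.cycleRange` makes its sign
immediate. -/
def consPerm (s : Fin (n + 1)) (τ : Perm (Fin n)) : Perm (Fin (n + 1)) :=
  s.cycleRange.symm * Perm.decomposeFin.symm (0, τ)

@[simp]
theorem consPerm_zero (s : Fin (n + 1)) (τ : Perm (Fin n)) : consPerm s τ 0 = s := by
  simp [consPerm]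

@[simp]
theorem consPerm_succ (s : Fin (n + 1)) (τ : Perm (Fin n)) (k : Fin n) :
    consPerm s τ k.succ = s.succAbove (τ k) := by
  simp [consPerm]

theorem sign_consPerm (s : Fin (n + 1)) (τ : Perm (Fin n)) :
    Perm.sign (consPerm s τ) = (-1) ^ (s : ℕ) * Perm.sign τ := by
  simp [consPerm, Perm.sign_symm, Fin.sign_cycleRange]

theorem consPerm_injective2 : Function.Injective2 (consPerm (n := n)) := by
  intro s s' τ τ' h
  obtain rfl : s = s' := by simpa using Equiv.congr_fun h 0
  refine ⟨rfl, Equiv.ext fun k => ?_⟩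
  simpa using Equiv.congr_fun h k.succ

theorem consPerm_bijective : Function.Bijective (Function.uncurry (consPerm (n := n))) := by
  rw [Fintype.bijective_iff_injective_and_card]
  exact ⟨consPerm_injective2.uncurry, by simp [Fintype.card_perm, Nat.factorial_succ]⟩

theorem sum_perm_fin_succ {M : Type*} [AddCommMonoid M] (F : Perm (Fin (n + 1)) → M) :
    ∑ σ, F σ = ∑ s, ∑ τ, F (consPerm s τ) := by
  rw [← consPerm_bijective.sum_comp, Fintype.sum_prod_type]
  rfl

end ConsPerm

section Bracket

variable {R : Type*} [Ring R] {n : ℕ}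

theorem eraseIdx_ofFn {α : Type*} (f : Fin (n + 1) → α) (s : Fin (n + 1)) :
    (List.ofFn f).eraseIdx s = List.ofFn fun k => f (s.succAbove k) := by
  refine List.ext_getElem (by grind) fun k _ _ => ?_
  simp only [List.getElem_eraseIdx, List.getElem_ofFn, Fin.succAbove, Fin.lt_def]
  split_ifs <;> first | rfl | contradiction

theorem nbr_eq_sum_eraseIdx {l : List R} (hl : 2 ≤ l.length) :
    nbr l = ∑ s ∈ Finset.range l.length, (-1 : R) ^ s * (l.getD s 0 * nbr (l.eraseIdx s)) := by
  match l, hl with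
  | a :: b :: t, _ =>
    refine Finset.sum_congr (rfl : Finset.range _ = _) fun s hs => ?_
    rw [nbr, List.length_eraseIdx_of_lt (Finset.mem_range.mp hs)]
    rfl

theorem nbr_ofFn_succ_succ (f : Fin (n + 2) → R) :
    nbr (List.ofFn f) =
      ∑ s : Fin (n + 2), (-1 : R) ^ (s : ℕ) *
        (f s * nbr (List.ofFn fun k => f (s.succAbove k))) := by
  rw [nbr_eq_sum_eraseIdx (by simp), List.length_ofFn, Finset.sum_range]
  refine Finset.sum_congr rfl fun s _ => ?_
  rw [eraseIdx_ofFn, List.getD_eq_getElem _ _ (by grind), List.getElem_ofFn]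

theorem nbr_ofFn_eq_sum_perm : ∀ {n : ℕ} (f : Fin (n + 1) → R),
    nbr (List.ofFn f) = ∑ σ : Perm (Fin (n + 1)), Perm.sign σ • (List.ofFn (f ∘ σ)).prod
  | 0, f => by simp [nbr, nbrAux]
  | n + 1, f => by
    rw [nbr_ofFn_succ_succ, sum_perm_fin_succ]
    refine Finset.sum_congr rfl fun s _ => ?_
    rw [nbr_ofFn_eq_sum_perm, Finset.mul_sum, Finset.mul_sum]
    refine Finset.sum_congr rfl fun τ _ => ?_
    have hprod : (List.ofFn (f ∘ consPerm s τ)).prod =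
        f s * (List.ofFn ((fun k => f (s.succAbove k)) ∘ τ)).prod := by
      simp [Function.comp_def]
    rw [hprod, sign_consPerm, mul_smul_comm, mul_smul]
    simp [Units.smul_def, -List.ofFn_succ]

end Bracket

section TwistedProduct

theorem prod_filter_lt_fin_succ {n : ℕ} {M : Type*} [CommMonoid M]
    (g : Fin (n + 1) → Fin (n + 1) → M) :
    ∏ pr : Fin (n + 1) × Fin (n + 1) with pr.1 < pr.2, g pr.1 pr.2 =
      (∏ k : Fin n, g 0 k.succ) *
        ∏ pr : Fin n × Fin n with pr.1 < pr.2, g pr.1.succ pr.2.succ := by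
  simp [Finset.prod_filter, Fintype.prod_prod_type, Fin.prod_univ_succ (n := n)]

theorem addChar_map_sum {ι M R : Type*} [AddCommMonoid M] [CommMonoid R] (ψ : AddChar M R)
    (s : Finset ι) (f : ι → M) : ψ (∑ j ∈ s, f j) = ∏ j ∈ s, ψ (f j) :=
  map_prod ψ.toMonoidHom (fun j => Multiplicative.ofAdd (f j)) s

theorem prod_ofFn_eq_smul {R A M : Type*} [CommSemiring R] [Semiring A] [Algebra R A]
    [AddCommMonoid M] (χ : M → AddChar M R) (T : M → A)
    (hT : ∀ m n, T m * T n = χ m n • T (m + n)) : ∀ {n : ℕ} (f : Fin (n + 1) → M),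
    (List.ofFn fun k => T (f k)).prod =
      (∏ pr : Fin (n + 1) × Fin (n + 1) with pr.1 < pr.2, χ (f pr.1) (f pr.2)) • T (∑ k, f k)
  | 0, f => by simp [Finset.prod_filter, Fintype.prod_prod_type]
  | n + 1, f => calc
    (List.ofFn fun k => T (f k)).prod = T (f 0) * (List.ofFn fun k => T (f k.succ)).prod := by
      rw [List.ofFn_succ, List.prod_cons]
    _ = ((∏ pr : Fin (n + 1) × Fin (n + 1) with pr.1 < pr.2, χ (f pr.1.succ) (f pr.2.succ)) *
          ∏ k : Fin (n + 1), χ (f 0) (f k.succ)) • T (∑ k, f k) := by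
      rw [prod_ofFn_eq_smul χ T hT, mul_smul_comm, hT, smul_smul, addChar_map_sum,
        Fin.sum_univ_succ f]
    _ = _ := by rw [prod_filter_lt_fin_succ fun s k => χ (f s) (f k), mul_comm]

end TwistedProduct

theorem stmt10_general {R A M : Type*} [CommRing R] [Ring A] [Algebra R A] [AddCommMonoid M]
    (χ : M → AddChar M R) (T : M → A) (hT : ∀ m n, T m * T n = χ m n • T (m + n))
    {n : ℕ} (hn : n ≠ 0) (i : Fin n → M) :
    nbr (List.ofFn fun j => T (i j)) =
      (∑ σ : Perm (Fin n), ((Perm.sign σ : ℤ) : R) *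
        ∏ pr : Fin n × Fin n with pr.1 < pr.2, χ (i (σ pr.1)) (i (σ pr.2))) • T (∑ j, i j) := by
  obtain ⟨n, rfl⟩ := Nat.exists_eq_succ_of_ne_zero hn
  rw [nbr_ofFn_eq_sum_perm, Finset.sum_smul]
  refine Finset.sum_congr rfl fun σ _ => ?_
  have hprod := prod_ofFn_eq_smul χ T hT (i ∘ σ)
  simp only [Function.comp_apply, Equiv.sum_comp σ i] at hprod
  rw [Function.comp_def, hprod, mul_smul, Units.smul_def, Int.cast_smul_eq_zsmul]

section WedgeChar

variable {K : Type*} [CommGroupWithZero K]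

/-- The character `k ↦ p ^ k` of `ℤ`. -/
def zpowAddChar (p : K) (hp : p ≠ 0) : AddChar ℤ K where
  toFun k := p ^ k
  map_zero_eq_one' := zpow_zero p
  map_add_eq_mul' := zpow_add₀ hp

/-- The linear form `m ↦ m ∧ n` on `ℤ²`. -/
def wedgeLeft (n : ℤ × ℤ) : ℤ × ℤ →+ ℤ where
  toFun m := wedge m n
  map_zero' := by simp [wedge]
  map_add' a b := by simp only [wedge, Prod.fst_add, Prod.snd_add]; ring

/-- The character `m ↦ p ^ (m ∧ n)` of `ℤ²`, which twists the products of the generators. -/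
def wedgeChar (p : K) (hp : p ≠ 0) (n : ℤ × ℤ) : AddChar (ℤ × ℤ) K :=
  (zpowAddChar p hp).compAddMonoidHom (wedgeLeft n)

theorem prod_wedgeChar {ι : Type*} (p : K) (hp : p ≠ 0) (s : Finset ι) (f g : ι → ℤ × ℤ) :
    ∏ j ∈ s, wedgeChar p hp (g j) (f j) = p ^ ∑ j ∈ s, wedge (f j) (g j) :=
  (addChar_map_sum (zpowAddChar p hp) s _).symm

end WedgeChar

/-- for a family `T : ℤ² → A` with `T_n T_m = p^{m∧n} • T_{n+m}`, the
n-bracket closes: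
`[T_{i₁},…,T_{i_n}] = (Σ_{σ∈S_n} sgn(σ) p^{Σ_{s<k} i_{σ(k)}∧i_{σ(s)}}) • T_{i₁+⋯+i_n}`. -/
theorem stmt10 {A : Type*} [Ring A] [Algebra ℂ A] (p : ℂ) (hp : p ≠ 0)
    (T : ℤ × ℤ → A) (hT : ∀ m n : ℤ × ℤ, T n * T m = p ^ wedge m n • T (n + m))
    (n : ℕ) (hn : 2 ≤ n) (i : Fin n → ℤ × ℤ) :
    nbr (List.ofFn fun j => T (i j)) =
      (∑ σ : Equiv.Perm (Fin n), ((Equiv.Perm.sign σ : ℤ) : ℂ) *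
          p ^ (∑ pr ∈ Finset.univ.filter (fun pr : Fin n × Fin n => pr.1 < pr.2),
                wedge (i (σ pr.2)) (i (σ pr.1)))) • T (∑ j, i j) := by
  simpa only [prod_wedgeChar] using
    stmt10_general (wedgeChar p hp) T (fun m n => hT n m) (by omega : n ≠ 0) i
end

section
/- Take p = −i (corresponding to q = e^{−πi}, i.e. α = 1/2). Then for all m, n, k ∈ ℤ², the operator Nambu 3-bracket closes as the sine 3-algebra: [T_m,T_n,T_k] = 2i·(sin((π/2)(m∧n − n∧k + k∧m)) + sin((π/2)(m∧n + n∧k − k∧m)) + sin((π/2)(−m∧n + n∧k + k∧m)))·T_{m+n+k}. -/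
/-- The operator Nambu 3-bracket `[A,B,C] = A(BC-CB) + B(CA-AC) + C(AB-BA)`. -/
def nambu {R : Type*} [Ring R] (x y z : R) : R :=
  x * (y * z - z * y) + y * (z * x - x * z) + z * (x * y - y * x)

/-!
For an alternating form `ω`, the product of `T m`, `T n`, `T k` in any order is a power of `p`
times `T (m + n + k)`, with exponent of the form `± ω m n ± ω n k ± ω k m`. Let `x` be one of the
three such sums with exactly one minus sign. Among the six products in the bracket, the exponent
`-x` occurs once, with coefficient `1`, and `x` once, with coefficient `-1`. For `p = exp (-iθ)`
the difference `p⁻ˣ - pˣ` is `2i sin (θx)`.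
-/

/-- The `q`-number `p⁻ˣ - pˣ`, without its normalising denominator. The Nambu bracket is a sum of
three of these; the sign is the one with which they occur there. -/
def zpowDiff {R : Type*} [Ring R] (p : Rˣ) (x : ℤ) : R := ↑(p ^ (-x)) - ↑(p ^ x)

theorem zpowDiff_exp (θ : ℂ) (x : ℤ) :
    zpowDiff (Units.mk0 _ (Complex.exp_ne_zero (-θ * Complex.I))) x
      = 2 * Complex.I * Complex.sin (θ * x) := by
  have h_neg : ((-x : ℤ) : ℂ) * (-θ * Complex.I) = θ * x * Complex.I := by push_cast; ring
  have h_pos : (x : ℂ) * (-θ * Complex.I) = -(θ * x) * Complex.I := by ring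
  calc zpowDiff (Units.mk0 _ (Complex.exp_ne_zero (-θ * Complex.I))) x
      = Complex.exp (θ * x * Complex.I) - Complex.exp (-(θ * x) * Complex.I) := by
        rw [zpowDiff, Units.val_zpow_eq_zpow_val, Units.val_zpow_eq_zpow_val, Units.val_mk0,
          ← Complex.exp_int_mul, ← Complex.exp_int_mul, h_neg, h_pos]
    _ = 2 * Complex.I * Complex.sin (θ * x) := by
        rw [Complex.exp_mul_I, Complex.exp_mul_I, Complex.cos_neg, Complex.sin_neg]
        ring

section TwistedProduct

variable {Λ : Type*} [AddCommGroup Λ] {ω : LinearMap.BilinForm ℤ Λ}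

theorem mul_mul_eq_zpow_smul {G S : Type*} [Group G] [Semigroup S] [MulAction G S]
    [IsScalarTower G S S] {p : G} {T : Λ → S}
    (hT : ∀ m n, T n * T m = p ^ ω m n • T (n + m)) (m n k : Λ) :
    T m * T n * T k = p ^ (ω n m + ω k m + ω k n) • T (m + n + k) := by
  rw [hT n m, smul_mul_assoc, hT k (m + n), smul_smul, ← zpow_add, map_add, add_assoc (ω n m)]

variable {R A : Type*} [CommRing R] [Ring A] [Algebra R A] {p : Rˣ} {T : Λ → A}

theorem mul_commutator_eq_smul (hω : ω.IsAlt)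
    (hT : ∀ m n, T n * T m = p ^ ω m n • T (n + m)) (m n k : Λ) :
    T m * (T n * T k - T k * T n)
      = ((↑(p ^ (-(ω m n + ω n k - ω k m))) : R) - ↑(p ^ (-ω m n + ω n k + ω k m)))
        • T (m + n + k) := by
  have h_mnk : ω n m + ω k m + ω k n = -(ω m n + ω n k - ω k m) := by
    rw [← LinearMap.IsAlt.neg hω m n, ← LinearMap.IsAlt.neg hω n k]; ring
  have h_mkn : ω k m + ω n m + ω n k = -ω m n + ω n k + ω k m := by
    rw [← LinearMap.IsAlt.neg hω m n]; ring
  rw [mul_sub, ← mul_assoc, ← mul_assoc, mul_mul_eq_zpow_smul hT,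
    mul_mul_eq_zpow_smul hT, h_mnk, h_mkn, add_right_comm m k n, Units.smul_def,
    Units.smul_def, sub_smul]

theorem nambu_eq_zpowDiff_smul (hω : ω.IsAlt)
    (hT : ∀ m n, T n * T m = p ^ ω m n • T (n + m)) (m n k : Λ) :
    nambu (T m) (T n) (T k)
      = (zpowDiff p (ω m n - ω n k + ω k m) + zpowDiff p (ω m n + ω n k - ω k m)
          + zpowDiff p (-ω m n + ω n k + ω k m)) • T (m + n + k) := by
  have h_nkm : n + k + m = m + n + k := by abel
  have h_kmn : k + m + n = m + n + k := by abel
  rw [nambu, mul_commutator_eq_smul hω hT m n k, mul_commutator_eq_smul hω hT n k m,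
    mul_commutator_eq_smul hω hT k m n, h_nkm, h_kmn, ← add_smul, ← add_smul]
  congr 1
  simp only [zpowDiff]
  ring_nf

end TwistedProduct

theorem stmt12_general {A Λ : Type*} [Ring A] [Algebra ℂ A] [AddCommGroup Λ]
    {ω : LinearMap.BilinForm ℤ Λ} (hω : ω.IsAlt) (θ : ℂ) (T : Λ → A)
    (hT : ∀ m n, T n * T m = Complex.exp (-θ * Complex.I) ^ ω m n • T (n + m)) (m n k : Λ) :
    nambu (T m) (T n) (T k)
      = (2 * Complex.I *
          (Complex.sin (θ * ((ω m n - ω n k + ω k m : ℤ) : ℂ))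
            + Complex.sin (θ * ((ω m n + ω n k - ω k m : ℤ) : ℂ))
            + Complex.sin (θ * ((-ω m n + ω n k + ω k m : ℤ) : ℂ)))) • T (m + n + k) := by
  have hT_unit (m n : Λ) :
      T n * T m = Units.mk0 _ (Complex.exp_ne_zero (-θ * Complex.I)) ^ ω m n • T (n + m) := by
    rw [hT, Units.smul_def, Units.val_zpow_eq_zpow_val, Units.val_mk0]
  rw [nambu_eq_zpowDiff_smul hω hT_unit, zpowDiff_exp, zpowDiff_exp, zpowDiff_exp,
    ← mul_add, ← mul_add]

/-- The wedge as a bilinear form on `ℤ²`, so that results for alternating forms apply to it. -/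
def wedgeForm : LinearMap.BilinForm ℤ (ℤ × ℤ) :=
  LinearMap.mk₂ ℤ wedge
    (fun _ _ _ => by simp only [wedge, Prod.fst_add, Prod.snd_add]; ring)
    (fun _ _ _ => by simp only [wedge, Prod.smul_fst, Prod.smul_snd, smul_eq_mul]; ring)
    (fun _ _ _ => by simp only [wedge, Prod.fst_add, Prod.snd_add]; ring)
    (fun _ _ _ => by simp only [wedge, Prod.smul_fst, Prod.smul_snd, smul_eq_mul]; ring)

theorem wedgeForm_isAlt : wedgeForm.IsAlt := fun m =>
  show m.1 * m.2 - m.2 * m.1 = 0 by ring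

/-- for `p = -i` (i.e. `q = e^{-πi}`, `α = 1/2`) the operator Nambu
3-bracket closes as the sine 3-algebra. -/
theorem stmt12 {A : Type*} [Ring A] [Algebra ℂ A]
    (T : ℤ × ℤ → A)
    (hT : ∀ m n : ℤ × ℤ, T n * T m = (-Complex.I) ^ wedge m n • T (n + m))
    (m n k : ℤ × ℤ) :
    nambu (T m) (T n) (T k)
      = (2 * Complex.I *
          (Complex.sin ((Real.pi : ℂ) / 2 * ((wedge m n - wedge n k + wedge k m : ℤ) : ℂ))
            + Complex.sin ((Real.pi : ℂ) / 2 * ((wedge m n + wedge n k - wedge k m : ℤ) : ℂ))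
            + Complex.sin ((Real.pi : ℂ) / 2 *
                ((-wedge m n + wedge n k + wedge k m : ℤ) : ℂ)))) • T (m + n + k) :=
  stmt12_general wedgeForm_isAlt (Real.pi / 2) T
    (by rw [← neg_div, Complex.exp_neg_pi_div_two_mul_I]; exact hT) m n k
end

section
/- Take p = −i (corresponding to q = e^{−πi}, i.e. α = 1/2). Then the sine 3-algebra is a Filippov 3-algebra: for all a, b, c, d, e ∈ ℤ², the fundamental identity holds for the operator Nambu 3-bracket, [T_a,T_b,[T_c,T_d,T_e]] = [[T_a,T_b,T_c],T_d,T_e] + [T_c,[T_a,T_b,T_d],T_e] + [T_c,T_d,[T_a,T_b,T_e]]. -/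
/-!
Since `p ^ 4 = 1`, the elements `T (2 • n)` are central in the subalgebra generated by the family,
and every `T m` is a central multiple of one of the four elements `T r` with `r ∈ {0, 1}²`. The
bracket is alternating and linear over the center, so it is enough to check the fundamental identity
on these four elements, where two of the five arguments coincide. The bracket of three distinct ones
is a central multiple of the fourth, because the four points of `{0, 1}²` sum to zero modulo 2;
hence every case of the identity there follows from antisymmetry.
-/

section Bracket

variable {A : Type*} [Ring A] (x y z : A)

@[simp]
theorem nambu_self_left : nambu x x z = 0 := by
  simp only [nambu]; noncomm_ring

@[simp]
theorem nambu_self_right : nambu x y y = 0 := by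
  simp only [nambu]; noncomm_ring

@[simp]
theorem nambu_self_outer : nambu x y x = 0 := by
  simp only [nambu]; noncomm_ring

theorem nambu_swap_left : nambu y x z = -nambu x y z := by
  simp only [nambu]; noncomm_ring

theorem nambu_swap_right : nambu x z y = -nambu x y z := by
  simp only [nambu]; noncomm_ring

theorem map_nambu {B : Type*} [Ring B] (f : A →+* B) :
    f (nambu x y z) = nambu (f x) (f y) (f z) := by
  simp only [nambu, map_add, map_sub, map_mul]

variable {R : Type*} [CommSemiring R] [Algebra R A]

theorem nambu_smul_left (r : R) : nambu (r • x) y z = r • nambu x y z := by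
  simp only [nambu, mul_smul_comm, smul_mul_assoc, ← smul_sub, ← smul_add]

theorem nambu_smul_middle (r : R) : nambu x (r • y) z = r • nambu x y z := by
  simp only [nambu, mul_smul_comm, smul_mul_assoc, ← smul_sub, ← smul_add]

theorem nambu_smul_right (r : R) : nambu x y (r • z) = r • nambu x y z := by
  simp only [nambu, mul_smul_comm, smul_mul_assoc, ← smul_sub, ← smul_add]

@[simp]
theorem nambu_zero_left : nambu 0 y z = 0 := by
  simp [nambu]

@[simp]
theorem nambu_zero_middle : nambu x 0 z = 0 := by
  simp [nambu]

@[simp]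
theorem nambu_zero_right : nambu x y 0 = 0 := by
  simp [nambu]

theorem nambu_neg_left : nambu (-x) y z = -nambu x y z := by
  simpa only [neg_one_smul] using nambu_smul_left x y z (-1 : ℤ)

theorem nambu_neg_middle : nambu x (-y) z = -nambu x y z := by
  simpa only [neg_one_smul] using nambu_smul_middle x y z (-1 : ℤ)

theorem nambu_neg_right : nambu x y (-z) = -nambu x y z := by
  simpa only [neg_one_smul] using nambu_smul_right x y z (-1 : ℤ)

end Bracket

/-- The fundamental (Filippov) identity at `x, y; u, v, w`: the operator `nambu x y` satisfies the
Leibniz rule on the bracket of `u`, `v` and `w`. It is stated pointwise so that it can be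
transported along the symmetries of its five arguments. -/
def FundamentalIdentity {A : Type*} [Ring A] (x y u v w : A) : Prop :=
  nambu x y (nambu u v w)
    = nambu (nambu x y u) v w + nambu u (nambu x y v) w + nambu u v (nambu x y w)

namespace FundamentalIdentity

variable {A : Type*} [Ring A] {x y u v w : A}

theorem map {B : Type*} [Ring B] (f : A →+* B) (h : FundamentalIdentity x y u v w) :
    FundamentalIdentity (f x) (f y) (f u) (f v) (f w) := by
  simpa only [map_add, map_nambu] using! congrArg f h

theorem swap₁₂ (h : FundamentalIdentity x y u v w) : FundamentalIdentity y x u v w := by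
  simp only [FundamentalIdentity, nambu_swap_left x y, nambu_neg_left, nambu_neg_middle,
    nambu_neg_right] at h ⊢
  rw [h]
  abel

theorem swap₃₄ (h : FundamentalIdentity x y u v w) : FundamentalIdentity x y v u w := by
  simp only [FundamentalIdentity, nambu_swap_left u, nambu_swap_left _ v,
    nambu_neg_right] at h ⊢
  rw [h]
  abel

theorem swap₄₅ (h : FundamentalIdentity x y u v w) : FundamentalIdentity x y u w v := by
  simp only [FundamentalIdentity, nambu_swap_right _ v, nambu_swap_right _ _ w,
    nambu_neg_right] at h ⊢
  rw [h]
  abel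

theorem self₁₂ (x u v w : A) : FundamentalIdentity x x u v w := by
  simp [FundamentalIdentity]

theorem self₃₄ (x y u w : A) : FundamentalIdentity x y u u w := by
  rw [FundamentalIdentity, nambu_swap_left u (nambu x y u)]
  simp

theorem self₁₃_self₂₄ (x y w : A) : FundamentalIdentity x y x y w := by
  simp [FundamentalIdentity]

variable {R : Type*} [CommSemiring R] [Algebra R A]

theorem smul (h : FundamentalIdentity x y u v w) (a b c d e : R) :
    FundamentalIdentity (a • x) (b • y) (c • u) (d • v) (e • w) := by
  simp only [FundamentalIdentity, nambu_smul_left, nambu_smul_middle, nambu_smul_right] at h ⊢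
  rw [h]
  module

theorem of_nambu_eq_smul {r s t : R} (hw : nambu x y v = r • w) (hv : nambu x y w = s • v)
    (hy : nambu x v w = t • y) : FundamentalIdentity x y x v w := by
  simp [FundamentalIdentity, hw, hv, hy, nambu_smul_middle, nambu_smul_right]

end FundamentalIdentity

section FourGenerators

variable {ι R A : Type*} [CommSemiring R] [Ring A] [Algebra R A] {f : ι → A}

theorem fundamentalIdentity_self₁₃
    (hf : ∀ i j k l, [i, j, k, l].Nodup → ∃ r : R, nambu (f i) (f j) (f k) = r • f l)
    (a b d e : ι) : FundamentalIdentity (f a) (f b) (f a) (f d) (f e) := by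
  by_cases hn : [a, b, d, e].Nodup
  · obtain ⟨r, hr⟩ := hf a b d e hn
    obtain ⟨s, hs⟩ := hf a b e d (by grind)
    obtain ⟨t, ht⟩ := hf a d e b (by grind)
    exact .of_nambu_eq_smul hr hs ht
  · have : a = b ∨ a = d ∨ a = e ∨ b = d ∨ b = e ∨ d = e := by grind
    rcases this with rfl | rfl | rfl | rfl | rfl | rfl
    · exact .self₁₂ ..
    · exact .self₃₄ ..
    · exact (FundamentalIdentity.self₃₄ ..).swap₄₅
    · exact .self₁₃_self₂₄ ..
    · exact (FundamentalIdentity.self₁₃_self₂₄ ..).swap₄₅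
    · exact (FundamentalIdentity.self₃₄ ..).swap₄₅.swap₃₄

theorem fundamentalIdentity_of_card_le_four [Fintype ι] (hι : Fintype.card ι ≤ 4)
    (hf : ∀ i j k l, [i, j, k, l].Nodup → ∃ r : R, nambu (f i) (f j) (f k) = r • f l)
    (a b c d e : ι) : FundamentalIdentity (f a) (f b) (f c) (f d) (f e) := by
  have key := fundamentalIdentity_self₁₃ hf
  have hn : ¬[a, b, c, d, e].Nodup := fun h => by simpa using h.length_le_card.trans hι
  have : a = b ∨ c = d ∨ c = e ∨ d = e ∨ a = c ∨ a = d ∨ a = e ∨ b = c ∨ b = d ∨ b = e := by grind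
  rcases this with rfl | rfl | rfl | rfl | rfl | rfl | rfl | rfl | rfl | rfl
  · exact .self₁₂ ..
  · exact .self₃₄ ..
  · exact (FundamentalIdentity.self₃₄ ..).swap₄₅
  · exact (FundamentalIdentity.self₃₄ ..).swap₄₅.swap₃₄
  · exact key ..
  · exact (key ..).swap₃₄
  · exact (key ..).swap₃₄.swap₄₅
  · exact (key ..).swap₁₂
  · exact (key ..).swap₃₄.swap₁₂
  · exact (key ..).swap₃₄.swap₄₅.swap₁₂

end FourGenerators

/-- A family indexed by `ℤ²` satisfying the multiplication rule of the generators of the sine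
algebra with parameter `p`. -/
def IsSineFamily {k A : Type*} [CommRing k] [Ring A] [Algebra k A] (p : kˣ) (T : ℤ × ℤ → A) :
    Prop :=
  ∀ m n, T n * T m = p ^ wedge m n • T (n + m)

/-- The class of a lattice point modulo `2`. -/
def parity : ℤ × ℤ →+ ZMod 2 × ZMod 2 :=
  (Int.castAddHom (ZMod 2)).prodMap (Int.castAddHom (ZMod 2))

/-- The representative in `{0, 1}²` of a class modulo `2`. -/
def parityRep (v : ZMod 2 × ZMod 2) : ℤ × ℤ := (v.1.val, v.2.val)

@[simp]
theorem parity_parityRep (v : ZMod 2 × ZMod 2) : parity (parityRep v) = v := by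
  simp [parity, parityRep]

theorem exists_eq_two_nsmul_add_of_parity_eq {m n : ℤ × ℤ} (h : parity m = parity n) :
    ∃ l, m = 2 • l + n := by
  obtain ⟨h₁, h₂⟩ : (m.1 : ZMod 2) = n.1 ∧ (m.2 : ZMod 2) = n.2 := Prod.ext_iff.mp h
  obtain ⟨s, hs⟩ := (ZMod.intCast_eq_intCast_iff_dvd_sub _ _ 2).mp h₁.symm
  obtain ⟨t, ht⟩ := (ZMod.intCast_eq_intCast_iff_dvd_sub _ _ 2).mp h₂.symm
  exact ⟨(s, t), Prod.ext (by simpa [sub_eq_iff_eq_add] using hs)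
    (by simpa [sub_eq_iff_eq_add] using ht)⟩

theorem add_add_eq_of_nodup : ∀ i j k l : ZMod 2 × ZMod 2, [i, j, k, l].Nodup → i + j + k = l := by
  decide

namespace IsSineFamily

variable {k A : Type*} [CommRing k] [Ring A] [Algebra k A] {p : kˣ} {T : ℤ × ℤ → A}

theorem commute_two_nsmul (hT : IsSineFamily p T) (hp : p ^ 4 = 1) (l n : ℤ × ℤ) :
    Commute (T (2 • l)) (T n) := by
  have hw : wedge n (2 • l) = wedge (2 • l) n + 4 * wedge n l := by
    simp only [wedge, two_nsmul, Prod.fst_add, Prod.snd_add]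
    ring
  have hp' : p ^ (4 : ℤ) = 1 := mod_cast hp
  rw [Commute, SemiconjBy, hT, hT, add_comm n, hw, zpow_add, zpow_mul, hp', one_zpow, mul_one]

theorem exists_smul_mul_eq (hT : IsSineFamily p T) (m n : ℤ × ℤ) :
    ∃ r : k, T (m + n) = r • T m * T n :=
  ⟨((p ^ wedge n m)⁻¹ : kˣ), by rw [smul_mul_assoc, hT, ← Units.smul_def, inv_smul_smul]⟩

theorem mul_mul_mem_span (hT : IsSineFamily p T) {a b c s : ℤ × ℤ} (h : a + (b + c) = s) :
    T a * (T b * T c) ∈ Submodule.span k {T s} := by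
  rw [hT c b, mul_smul_comm, hT (b + c) a, h, Units.smul_def, Units.smul_def, smul_smul]
  exact Submodule.smul_mem _ _ (Submodule.mem_span_singleton_self _)

theorem nambu_mem_span (hT : IsSineFamily p T) (a b c : ℤ × ℤ) :
    nambu (T a) (T b) (T c) ∈ Submodule.span k {T (a + b + c)} := by
  simp only [nambu, mul_sub]
  refine add_mem (add_mem (sub_mem ?_ ?_) (sub_mem ?_ ?_)) (sub_mem ?_ ?_) <;>
    exact hT.mul_mul_mem_span (by abel)

theorem exists_center_smul_of_parity_eq (hT : IsSineFamily p T)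
    (hc : ∀ l, T (2 • l) ∈ Subring.center A) {m n : ℤ × ℤ} (h : parity m = parity n) :
    ∃ z : Subring.center A, T m = z • T n := by
  obtain ⟨l, rfl⟩ := exists_eq_two_nsmul_add_of_parity_eq h
  obtain ⟨r, hr⟩ := hT.exists_smul_mul_eq (2 • l) n
  exact ⟨⟨r • T (2 • l), (Subalgebra.center k A).smul_mem (hc l) r⟩, hr⟩

theorem exists_nambu_parityRep_eq_smul (hT : IsSineFamily p T)
    (hc : ∀ l, T (2 • l) ∈ Subring.center A) (i j k l : ZMod 2 × ZMod 2)
    (h : [i, j, k, l].Nodup) :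
    ∃ z : Subring.center A,
      nambu (T (parityRep i)) (T (parityRep j)) (T (parityRep k)) = z • T (parityRep l) := by
  obtain ⟨r, hr⟩ := Submodule.mem_span_singleton.mp
    (hT.nambu_mem_span (parityRep i) (parityRep j) (parityRep k))
  obtain ⟨z, hz⟩ := hT.exists_center_smul_of_parity_eq hc
    (m := parityRep i + parityRep j + parityRep k) (n := parityRep l)
    (by simpa using add_add_eq_of_nodup i j k l h)
  refine ⟨⟨r • (z : A), (Subalgebra.center _ A).smul_mem z.2 r⟩, ?_⟩
  rw [← hr, hz]
  exact (smul_mul_assoc ..).symm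

theorem fundamentalIdentity_of_mem_center (hT : IsSineFamily p T)
    (hc : ∀ l, T (2 • l) ∈ Subring.center A) (a b c d e : ℤ × ℤ) :
    FundamentalIdentity (T a) (T b) (T c) (T d) (T e) := by
  have hz (m) : ∃ z : Subring.center A, T m = z • T (parityRep (parity m)) :=
    hT.exists_center_smul_of_parity_eq hc (by simp)
  choose z hz using hz
  rw [hz a, hz b, hz c, hz d, hz e]
  exact (fundamentalIdentity_of_card_le_four (f := fun v => T (parityRep v)) (by decide)
    (hT.exists_nambu_parityRep_eq_smul hc) _ _ _ _ _).smul ..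

theorem fundamentalIdentity (hT : IsSineFamily p T) (hp : p ^ 4 = 1) (a b c d e : ℤ × ℤ) :
    FundamentalIdentity (T a) (T b) (T c) (T d) (T e) := by
  let B := Algebra.adjoin k (Set.range T)
  let T' (n : ℤ × ℤ) : B := ⟨T n, Algebra.subset_adjoin ⟨n, rfl⟩⟩
  have hT' : IsSineFamily p T' := fun m n => Subtype.ext (hT m n)
  have hc (l) : T' (2 • l) ∈ Subring.center B := by
    have hB : B ≤ Subalgebra.centralizer k {T (2 • l)} := Algebra.adjoin_le <| by
      rintro _ ⟨n, rfl⟩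
      rw [SetLike.mem_coe, Subalgebra.mem_centralizer_iff]
      rintro _ rfl
      exact hT.commute_two_nsmul hp l n
    refine Subring.mem_center_iff.mpr fun x => Subtype.ext ?_
    exact ((Subalgebra.mem_centralizer_iff k).mp (hB x.2) _ rfl).symm
  exact (hT'.fundamentalIdentity_of_mem_center hc a b c d e).map B.val.toRingHom

end IsSineFamily

theorem stmt13_general {k A : Type*} [CommRing k] [Ring A] [Algebra k A] (p : kˣ) (hp : p ^ 4 = 1)
    (T : ℤ × ℤ → A) (hT : ∀ m n : ℤ × ℤ, T n * T m = p ^ wedge m n • T (n + m))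
    (a b c d e : ℤ × ℤ) :
    nambu (T a) (T b) (nambu (T c) (T d) (T e))
      = nambu (nambu (T a) (T b) (T c)) (T d) (T e)
        + nambu (T c) (nambu (T a) (T b) (T d)) (T e)
        + nambu (T c) (T d) (nambu (T a) (T b) (T e)) :=
  IsSineFamily.fundamentalIdentity hT hp a b c d e

/-- for `p = -i` (i.e. `q = e^{-πi}`, `α = 1/2`) the sine 3-algebra is a
Filippov 3-algebra: the fundamental identity holds for the operator Nambu 3-bracket. -/
theorem stmt13 {A : Type*} [Ring A] [Algebra ℂ A]
    (T : ℤ × ℤ → A)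
    (hT : ∀ m n : ℤ × ℤ, T n * T m = (-Complex.I) ^ wedge m n • T (n + m))
    (a b c d e : ℤ × ℤ) :
    nambu (T a) (T b) (nambu (T c) (T d) (T e))
      = nambu (nambu (T a) (T b) (T c)) (T d) (T e)
        + nambu (T c) (nambu (T a) (T b) (T d)) (T e)
        + nambu (T c) (T d) (nambu (T a) (T b) (T e)) := by
  have hp : Units.mk0 (-Complex.I) (by simp) ^ 4 = 1 := by
    ext; simp [Even.neg_pow (by decide : Even 4)]
  exact stmt13_general _ hp T (by simpa [Units.smul_def] using hT) a b c d e
end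

section
/- Let n ≥ 2 be even. Then for all k₁,…,k_{2n−1} ∈ ℤ², the fully antisymmetrized sh-Jacobi sum of the (co)sine n-algebra vanishes: Σ_{σ∈S_{2n−1}} sgn(σ)·[[T_{k_{σ(1)}},…,T_{k_{σ(n)}}], T_{k_{σ(n+1)}},…,T_{k_{σ(2n−1)}}] = 0, where the inner and outer brackets are the recursive n-brackets in A; i.e. for even n the (co)sine n-algebra is a sh-n-Lie algebra. -/
/-!
Under the alternating sum over `σ`, reordering the letters of a word costs just the sign of the
reordering. Hence the `n!` terms of an `n`-bracket all contribute the same, and in the outer bracket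
only the position `j` of the inner bracket counts: the bracket has the sign `(-1) ^ j` there, and
carrying `j` letters across an inner bracket of `k` letters costs `(-1) ^ (k * j)`. So a `k`-bracket
nested in an `(m + 1)`-bracket gives the antisymmetrized word with coefficient
`k! m! ∑ j ≤ m, (-1) ^ ((k + 1) * j)`, and for even `k = m + 1` this alternating sum has an even
number of terms and vanishes.
-/

section Bracket

variable {R : Type*} [Ring R]

@[simp] lemma nbr_singleton (a : R) : nbr [a] = a := by
  simp [nbr, nbrAux]

lemma nbr_eq_sum {l : List R} {n : ℕ} (hl : l.length = n + 2) :
    nbr l = ∑ s : Fin (n + 2), (-1 : ℤ) ^ (s : ℕ) • (l[(s : ℕ)] * nbr (l.eraseIdx s)) := by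
  obtain ⟨a, b, l, rfl⟩ : ∃ a b l', l = a :: b :: l' := by
    match l, hl with
    | a :: b :: l', _ => exact ⟨a, b, l', rfl⟩
  obtain rfl : l.length = n := by simpa using hl
  have hnbr : nbr (a :: b :: l) = ∑ s ∈ Finset.range (l.length + 2),
      (-1 : R) ^ s * ((a :: b :: l).getD s 0 *
        nbrAux (l.length + 1) ((a :: b :: l).eraseIdx s)) := by
    simp [nbr, nbrAux]
  rw [hnbr, Finset.sum_range]
  refine Finset.sum_congr rfl fun s _ => ?_
  have hlen : ((a :: b :: l).eraseIdx s).length = l.length + 1 := by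
    simpa using List.length_eraseIdx_of_lt (l := a :: b :: l) s.isLt
  rw [List.getD_eq_getElem _ _ s.isLt, nbr, hlen, zsmul_eq_mul]
  simp

lemma nbr_cons (z : R) {l : List R} {n : ℕ} (hl : l.length = n + 1) :
    nbr (z :: l) = z * nbr l -
      ∑ s : Fin (n + 1), (-1 : ℤ) ^ (s : ℕ) • (l[(s : ℕ)] * nbr (z :: l.eraseIdx s)) := by
  rw [nbr_eq_sum (n := n) (by simpa using hl), Fin.sum_univ_succ, sub_eq_add_neg,
    ← Finset.sum_neg_distrib]
  simp [pow_succ]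

end Bracket

section AltWord

variable {R ι : Type*} [Ring R] [Fintype ι] [DecidableEq ι]

/-- The antisymmetrization `∑ σ, sgn σ • x (σ i₁) ⋯ x (σ iᵣ)` of the word `L = i₁ ⋯ iᵣ`. The sum is
over all permutations of the alphabet `ι`, not of the positions of the word, so that words of
different shapes can be compared under one sum; if every letter occurs exactly once in `L`, this is
the standard polynomial in the `x i` up to sign. -/
def altWord (x : ι → R) (L : List ι) : R :=
  ∑ σ : Equiv.Perm ι, (Equiv.Perm.sign σ : ℤ) • (L.map (x ∘ σ)).prod

lemma altWord_map_perm (x : ι → R) (π : Equiv.Perm ι) (L : List ι) :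
    altWord x (L.map π) = (Equiv.Perm.sign π : ℤ) • altWord x L := by
  rw [altWord, altWord, Finset.smul_sum, ← Equiv.sum_comp (Equiv.mulRight π⁻¹)]
  refine Finset.sum_congr rfl fun σ _ => ?_
  have hword : (L.map π).map (x ∘ (σ * π⁻¹ : Equiv.Perm ι)) = L.map (x ∘ σ) := by
    simp [Function.comp_def]
  rw [Equiv.coe_mulRight, hword, smul_smul, map_mul, Equiv.Perm.sign_inv, Units.val_mul, mul_comm]

lemma altWord_swap (x : ι → R) {U W : List ι} {a b : ι} (h : (U ++ a :: b :: W).Nodup) :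
    altWord x (U ++ a :: b :: W) = -altWord x (U ++ b :: a :: W) := by
  have hab : a ≠ b := by grind
  have hfix : ∀ L ⊆ U ++ W, L.map (Equiv.swap a b) = L := fun L hL =>
    (List.map_congr_left fun c hc =>
      Equiv.swap_apply_of_ne_of_ne (by grind) (by grind)).trans L.map_id
  have hswap : (U ++ b :: a :: W).map (Equiv.swap a b) = U ++ a :: b :: W := by
    simp [hfix U (by simp), hfix W (by simp)]
  rw [← hswap, altWord_map_perm, Equiv.Perm.sign_swap hab]
  simp

lemma altWord_append_cons_append (x : ι → R) {U P W : List ι} {a : ι}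
    (h : (U ++ a :: (P ++ W)).Nodup) :
    altWord x (U ++ a :: (P ++ W)) = (-1 : ℤ) ^ P.length • altWord x (U ++ (P ++ a :: W)) := by
  induction P generalizing U with
  | nil => simp
  | cons b P ih =>
    have hcons := ih (U := U ++ [b]) (by grind)
    simp only [List.append_assoc, List.singleton_append] at hcons
    simp only [List.cons_append] at h ⊢
    rw [altWord_swap x h, hcons, List.length_cons, pow_succ, mul_neg_one, neg_smul]

/-- `t : Equiv.Perm ι → R` antisymmetrizes to `c` times the word `V` if it may be replaced by
`c • x (σ v₁) ⋯ x (σ vᵣ)` under the alternating sum over `σ`. The prefix `U` makes the notion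
stable under multiplication by letters on the left. -/
def AntisymmetrizesTo (x : ι → R) (t : Equiv.Perm ι → R) (c : ℤ) (V : List ι) : Prop :=
  ∀ U : List ι, (U ++ V).Nodup →
    ∑ σ : Equiv.Perm ι, (Equiv.Perm.sign σ : ℤ) • ((U.map (x ∘ σ)).prod * t σ) =
      c • altWord x (U ++ V)

namespace AntisymmetrizesTo

variable {x : ι → R} {t t' : Equiv.Perm ι → R} {c c' : ℤ} {L M P V W : List ι} {a : ι}

lemma one : AntisymmetrizesTo x (fun _ => 1) 1 [] := by
  intro U _
  simp [altWord]

lemma letter_mul (ht : AntisymmetrizesTo x t c V) (a : ι) :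
    AntisymmetrizesTo x (fun σ => x (σ a) * t σ) c (a :: V) := by
  intro U hU
  simpa [mul_assoc] using ht (U ++ [a]) (by simpa using hU)

lemma sub (ht : AntisymmetrizesTo x t c V) (ht' : AntisymmetrizesTo x t' c' V) :
    AntisymmetrizesTo x (fun σ => t σ - t' σ) (c - c') V := by
  intro U hU
  simp only [mul_sub, smul_sub, Finset.sum_sub_distrib, ht U hU, ht' U hU, sub_smul]

lemma zsmul (ht : AntisymmetrizesTo x t c V) (d : ℤ) :
    AntisymmetrizesTo x (fun σ => d • t σ) (d * c) V := by
  intro U hU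
  simp only [mul_smul_comm, smul_comm _ d, ← Finset.smul_sum, ht U hU, mul_smul]

lemma sum {κ : Type*} {s : Finset κ} {t : κ → Equiv.Perm ι → R} {c : κ → ℤ}
    (ht : ∀ i ∈ s, AntisymmetrizesTo x (t i) (c i) V) :
    AntisymmetrizesTo x (fun σ => ∑ i ∈ s, t i σ) (∑ i ∈ s, c i) V := by
  intro U hU
  simp only [Finset.mul_sum, Finset.smul_sum, Finset.sum_smul]
  rw [Finset.sum_comm]
  exact Finset.sum_congr rfl fun i hi => by rw [← ht i hi U hU]

lemma move_letter (ht : AntisymmetrizesTo x t c (a :: (P ++ W))) :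
    AntisymmetrizesTo x t ((-1) ^ P.length * c) (P ++ a :: W) := by
  intro U hU
  have hU' : (U ++ a :: (P ++ W)).Nodup := by grind
  rw [ht U hU', altWord_append_cons_append x hU', smul_smul, mul_comm]

lemma of_getElem_cons_eraseIdx {s : ℕ} (hs : s < L.length)
    (ht : AntisymmetrizesTo x t c (L[s] :: (P ++ (L.eraseIdx s ++ V)))) :
    AntisymmetrizesTo x t ((-1) ^ (P.length + s) * c) (P ++ (L ++ V)) := by
  have hmove := move_letter (P := P ++ L.take s) (W := L.drop (s + 1) ++ V)
    (by simpa [List.eraseIdx_eq_take_drop_succ] using ht)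
  have hsplit : L = L.take s ++ L[s] :: L.drop (s + 1) := by simp
  rw [List.length_append, List.length_take_of_le hs.le] at hmove
  rw [hsplit]
  simpa only [List.append_assoc, List.cons_append] using hmove

/-- The sign `(-1) ^ s` is the one that carries the letter `L[s]` back to its place in `L`, so all
terms contribute equally. -/
lemma sum_letter_mul_eraseIdx {n : ℕ} (hn : L.length = n) {t : Fin n → Equiv.Perm ι → R}
    (ht : ∀ s, AntisymmetrizesTo x (t s) c (P ++ (L.eraseIdx s ++ V))) :
    AntisymmetrizesTo x
      (fun σ => ∑ s : Fin n, (-1 : ℤ) ^ (s : ℕ) • (x (σ L[(s : ℕ)]) * t s σ))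
      (n * ((-1) ^ P.length * c)) (P ++ (L ++ V)) := by
  subst hn
  have hterm (s : Fin L.length) :=
    (((ht s).letter_mul L[(s : ℕ)]).of_getElem_cons_eraseIdx s.isLt).zsmul ((-1) ^ (s : ℕ))
  convert sum (s := Finset.univ) fun s _ => hterm s using 1
  have hsign (s : Fin L.length) :
      (-1 : ℤ) ^ (s : ℕ) * ((-1) ^ (P.length + s) * c) = (-1) ^ P.length * c := by
    rw [pow_add, ← mul_assoc, mul_left_comm, ← mul_pow]
    simp
  simp [hsign]

lemma nbr_mul (hL : L ≠ []) (ht : AntisymmetrizesTo x t c V) :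
    AntisymmetrizesTo x (fun σ => nbr (L.map (x ∘ σ)) * t σ) (L.length.factorial * c) (L ++ V) := by
  induction hn : L.length using Nat.twoStepInduction generalizing L with
  | zero => exact absurd (List.length_eq_zero_iff.1 hn) hL
  | one =>
    obtain ⟨a, rfl⟩ := List.length_eq_one_iff.1 hn
    simpa using ht.letter_mul a
  | more n _ ih =>
    have herase (s : Fin (n + 2)) : AntisymmetrizesTo x
        (fun σ => nbr ((L.eraseIdx s).map (x ∘ σ)) * t σ) ((n + 1).factorial * c)
        ([] ++ (L.eraseIdx s ++ V)) := by
      have hlen : (L.eraseIdx s).length = n + 1 := by grind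
      exact ih (List.ne_nil_of_length_eq_add_one hlen) hlen
    have hletters := sum_letter_mul_eraseIdx hn herase
    rw [List.nil_append] at hletters
    convert hletters using 1
    · ext σ
      rw [nbr_eq_sum (n := n) (by simpa using hn), Finset.sum_mul]
      simp [List.eraseIdx_map, mul_assoc]
    · simp only [Nat.factorial_succ (n + 1), List.length_nil]
      push_cast
      ring

/-- The coefficients `cₘ` of the induction on `M` satisfy `c₀ = |L|!` and
`cₘ₊₁ = (m + 1)! |L|! - (m + 1) (-1) ^ |L| cₘ`: in the leading product of the outer bracket stands
either the inner bracket or a letter of `M`, and the latter has to be carried across `L`. -/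
lemma nbr_nbr_cons (hL : L ≠ []) :
    AntisymmetrizesTo x (fun σ => nbr (nbr (L.map (x ∘ σ)) :: M.map (x ∘ σ)))
      (L.length.factorial * (M.length.factorial *
        ∑ j ∈ Finset.range (M.length + 1), ((-1) ^ (L.length + 1)) ^ j)) (L ++ M) := by
  induction hm : M.length generalizing M with
  | zero =>
    obtain rfl := List.length_eq_zero_iff.1 hm
    simpa using (one (x := x)).nbr_mul hL
  | succ m ih =>
    have hM : M ≠ [] := List.ne_nil_of_length_eq_add_one hm
    have hbracket := ((one (x := x)).nbr_mul hM).nbr_mul hL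
    have herase (s : Fin (m + 1)) : AntisymmetrizesTo x
        (fun σ => nbr (nbr (L.map (x ∘ σ)) :: (M.eraseIdx s).map (x ∘ σ)))
        (L.length.factorial * (m.factorial *
          ∑ j ∈ Finset.range (m + 1), ((-1) ^ (L.length + 1)) ^ j))
        (L ++ (M.eraseIdx s ++ [])) := by
      have hlen : (M.eraseIdx s).length = m := by grind
      simpa using ih hlen
    have hletters := sum_letter_mul_eraseIdx hm herase
    rw [List.append_nil] at hbracket hletters
    convert hbracket.sub hletters using 1
    · ext σ
      rw [nbr_cons (n := m) _ (by simpa using hm)]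
      simp [List.eraseIdx_map]
    · rw [geom_sum_succ, hm, Nat.factorial_succ]
      push_cast
      ring

end AntisymmetrizesTo

theorem sum_sign_smul_nbr_nbr (x : ι → R) {L M : List ι} (hL : L ≠ []) (hLM : (L ++ M).Nodup) :
    ∑ σ : Equiv.Perm ι, (Equiv.Perm.sign σ : ℤ) •
        nbr (nbr (L.map (x ∘ σ)) :: M.map (x ∘ σ)) =
      (L.length.factorial * (M.length.factorial *
        ∑ j ∈ Finset.range (M.length + 1), ((-1) ^ (L.length + 1)) ^ j) : ℤ) •
          altWord x (L ++ M) := by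
  simpa using AntisymmetrizesTo.nbr_nbr_cons (x := x) hL [] hLM

theorem sum_sign_smul_nbr_nbr_eq_zero (x : ι → R) {L M : List ι} (hL : L ≠ [])
    (hLM : (L ++ M).Nodup) (hLeven : Even L.length) (hModd : Odd M.length) :
    ∑ σ : Equiv.Perm ι, (Equiv.Perm.sign σ : ℤ) •
      nbr (nbr (L.map (x ∘ σ)) :: M.map (x ∘ σ)) = 0 := by
  rw [sum_sign_smul_nbr_nbr x hL hLM, hLeven.add_one.neg_one_pow, neg_one_geom_sum,
    if_pos hModd.add_one]
  simp

end AltWord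

theorem stmt14_general {R : Type*} [Ring R] {n N : ℕ} (hev : Even n) (hN : N + 1 = 2 * n)
    (x : Fin N → R) :
    ∑ σ : Equiv.Perm (Fin N), (Equiv.Perm.sign σ : ℤ) •
      nbr ((nbr (List.ofFn fun j : Fin n => x (σ (Fin.castLE (by omega) j)))) ::
        (List.ofFn fun j : Fin (n - 1) => x (σ ⟨n + (j : ℕ), by omega⟩))) = 0 := by
  have hle : n ≤ N := by omega
  let L : List (Fin N) := List.ofFn (Fin.castLE hle)
  let M : List (Fin N) := List.ofFn fun j : Fin (n - 1) => ⟨n + (j : ℕ), by omega⟩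
  have hL : L ≠ [] := List.ne_nil_of_length_pos (by rw [List.length_ofFn]; omega)
  have hLM : (L ++ M).Nodup := by
    refine List.Nodup.append (List.nodup_ofFn.2 (Fin.castLE_injective hle))
      (List.nodup_ofFn.2 fun i j h => by simpa [Fin.ext_iff] using h) ?_
    simp only [List.disjoint_left, List.mem_ofFn, L, M]
    rintro _ ⟨i, rfl⟩ ⟨j, hj⟩
    have hval : n + (j : ℕ) = i := congrArg Fin.val hj
    omega
  have hLeven : Even L.length := by simpa [L] using hev
  have hModd : Odd M.length := by
    simpa [M] using Nat.Even.sub_odd (by omega) hev odd_one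
  simpa [L, M, List.map_ofFn, Function.comp_def] using
    sum_sign_smul_nbr_nbr_eq_zero x hL hLM hLeven hModd

/-- for even `n ≥ 2` the (co)sine n-algebra is a sh-n-Lie algebra: the
fully antisymmetrized sh-Jacobi sum of the n-brackets of the generators vanishes. -/
theorem stmt14 {A : Type*} [Ring A] [Algebra ℂ A] (p : ℂ) (hp : p ≠ 0)
    (T : ℤ × ℤ → A) (hT : ∀ m n : ℤ × ℤ, T n * T m = p ^ wedge m n • T (n + m))
    (n : ℕ) (hn : 2 ≤ n) (hev : Even n) (k : Fin (2 * n - 1) → ℤ × ℤ) :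
    ∑ σ : Equiv.Perm (Fin (2 * n - 1)), (Equiv.Perm.sign σ : ℤ) •
      nbr ((nbr (List.ofFn fun j : Fin n => T (k (σ (Fin.castLE (by omega) j))))) ::
        (List.ofFn fun j : Fin (n - 1) =>
          T (k (σ ⟨n + (j : ℕ), by have := j.isLt; omega⟩)))) = 0 := by
  exact stmt14_general hev (by omega) fun i => T (k i)
end

section
/- Let q = p² and assume q² ≠ 1, and set T̄_m = (q − q^{-1})^{-1}·T_m. Then for all m, n ∈ ℤ², the q-deformed SDiff(T²) algebra relation holds: p^{3(m∧n)}·T̄_m·T̄_n − p^{3(n∧m)}·T̄_n·T̄_m = [m∧n]·T̄_{m+n}, where [x] = (q^x − q^{-x})/(q − q^{-1}). -/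
/-
The factor `p^{3(m∧n)}` compensates the phase `p^{n∧m} = p^{-(m∧n)}` of `T_m T_n`, leaving
`q^{m∧n} T_{m+n}`. Exchanging `m` and `n` replaces `q^{m∧n}` by `q^{-(m∧n)}`, so the deformed
commutator is `(q^{m∧n} - q^{-(m∧n)}) T_{m+n}`. Rescaling the generators by a scalar `c` multiplies
this coefficient by `c`, and `c = (q - q⁻¹)⁻¹` makes it the q-number `[m∧n]`.
-/

theorem wedge_eq_neg_wedge_swap (m n : ℤ × ℤ) : wedge m n = -wedge n m := by
  unfold wedge
  ring

section TwistedProduct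

variable {G : Type*} [AddCommMagma G] {ω : G → G → ℤ}

theorem zpow_three_mul_smul_mul {Γ A : Type*} [Group Γ] [Mul A] [MulAction Γ A] {p : Γ}
    (hω : ∀ m n, ω m n = -ω n m) {T : G → A} (hT : ∀ m n, T n * T m = p ^ ω m n • T (n + m))
    (m n : G) :
    p ^ (3 * ω m n) • (T m * T n) = (p ^ 2) ^ ω m n • T (m + n) := by
  have phase : p ^ (3 * ω m n) * p ^ ω n m = (p ^ 2) ^ ω m n := by
    rw [← zpow_add, hω n m, ← zpow_natCast p 2, ← zpow_mul]
    congr 1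
    push_cast
    ring
  rw [hT n m, smul_smul, phase]

variable {K A : Type*} [NonUnitalNonAssocRing A]

theorem zpow_three_mul_smul_mul_sub_swap [Ring K] [Module K A] {p : Kˣ}
    (hω : ∀ m n, ω m n = -ω n m) {T : G → A}
    (hT : ∀ m n, T n * T m = p ^ ω m n • T (n + m)) (m n : G) :
    p ^ (3 * ω m n) • (T m * T n) - p ^ (3 * ω n m) • (T n * T m)
      = (((p ^ 2) ^ ω m n : Kˣ) - ((p ^ 2) ^ (-ω m n) : Kˣ) : K) • T (m + n) := by
  rw [zpow_three_mul_smul_mul hω hT m n, zpow_three_mul_smul_mul hω hT n m, add_comm n m, hω n m,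
    sub_smul, Units.smul_def, Units.smul_def]

theorem stmt16_general [CommRing K] [Module K A] [IsScalarTower K A A] [SMulCommClass K A A]
    {p : Kˣ} (hω : ∀ m n, ω m n = -ω n m) {T : G → A}
    (hT : ∀ m n, T n * T m = p ^ ω m n • T (n + m))
    {c : K} {Tb : G → A} (hTb : ∀ m, Tb m = c • T m) (m n : G) :
    p ^ (3 * ω m n) • (Tb m * Tb n) - p ^ (3 * ω n m) • (Tb n * Tb m)
      = (c * (((p ^ 2) ^ ω m n : Kˣ) - ((p ^ 2) ^ (-ω m n) : Kˣ))) • Tb (m + n) := by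
  have mul_rescaled (k l : G) : Tb k * Tb l = (c * c) • (T k * T l) := by
    rw [hTb, hTb, smul_mul_smul_comm]
  calc
    p ^ (3 * ω m n) • (Tb m * Tb n) - p ^ (3 * ω n m) • (Tb n * Tb m)
    _ = (c * c) • (p ^ (3 * ω m n) • (T m * T n) - p ^ (3 * ω n m) • (T n * T m)) := by
      rw [mul_rescaled, mul_rescaled, smul_sub, smul_comm (c * c), smul_comm (c * c)]
    _ = (c * c) • (((p ^ 2) ^ ω m n : Kˣ) - ((p ^ 2) ^ (-ω m n) : Kˣ) : K) • T (m + n) := by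
      rw [zpow_three_mul_smul_mul_sub_swap hω hT]
    _ = (c * (((p ^ 2) ^ ω m n : Kˣ) - ((p ^ 2) ^ (-ω m n) : Kˣ))) • Tb (m + n) := by
      rw [hTb, smul_smul, smul_smul, mul_right_comm]

end TwistedProduct

/-- with `q = p²`, `q² ≠ 1` and `T̄_m = (q - q⁻¹)⁻¹ • T_m`, the
q-deformed SDiff(T²) algebra relation
`p^{3(m∧n)} T̄_m T̄_n - p^{3(n∧m)} T̄_n T̄_m = [m∧n] T̄_{m+n}` holds. -/
theorem stmt16 {A : Type*} [Ring A] [Algebra ℂ A] (p : ℂ) (hp : p ≠ 0)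
    (hq2 : (p ^ 2) ^ 2 ≠ 1)
    (T : ℤ × ℤ → A) (hT : ∀ m n : ℤ × ℤ, T n * T m = p ^ wedge m n • T (n + m))
    (Tb : ℤ × ℤ → A) (hTb : ∀ m : ℤ × ℤ, Tb m = (p ^ 2 - (p ^ 2)⁻¹)⁻¹ • T m)
    (m n : ℤ × ℤ) :
    p ^ (3 * wedge m n) • (Tb m * Tb n) - p ^ (3 * wedge n m) • (Tb n * Tb m)
      = qnum (p ^ 2) (wedge m n) • Tb (m + n) := by
  simpa [qnum, div_eq_inv_mul, Units.smul_def] using stmt16_general (p := Units.mk0 p hp)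
    wedge_eq_neg_wedge_swap (by simpa [Units.smul_def] using hT) hTb m n
end

section
/- Let q be a nonzero complex number with q² ≠ 1, let n ≥ 2 be even, and define the structure constants of the q-deformed SDiff(T²) n-algebra by F_n(i₁,…,i_n) = (q − q^{-1})^{-1}·Σ_{σ∈S_n} sgn(σ)·q^{Σ_{1≤k<s≤n} i_{σ(k)}∧i_{σ(s)}} for i₁,…,i_n ∈ ℤ². Then for all k₁,…,k_{2n−1} ∈ ℤ², the fully antisymmetrized sh-Jacobi sum vanishes: Σ_{σ∈S_{2n−1}} sgn(σ)·F_n(k_{σ(1)},…,k_{σ(n)})·F_n(k_{σ(1)}+⋯+k_{σ(n)}, k_{σ(n+1)},…,k_{σ(2n−1)}) = 0; i.e. for even n the q-deformed SDiff(T²) n-algebra is a sh-n-Lie algebra. -/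
/-- The structure constants of the q-deformed SDiff(T²) n-algebra:
`F_n(i₁,…,i_n) = (q-q⁻¹)⁻¹ Σ_{σ∈S_n} sgn(σ) q^{Σ_{1≤k<s≤n} i_{σ(k)}∧i_{σ(s)}}`. -/
noncomputable def Fsd (q : ℂ) (n : ℕ) (i : Fin n → ℤ × ℤ) : ℂ :=
  (q - q⁻¹)⁻¹ *
    ∑ σ : Equiv.Perm (Fin n), ((Equiv.Perm.sign σ : ℤ) : ℂ) *
      q ^ (∑ pr ∈ Finset.univ.filter (fun pr : Fin n × Fin n => pr.1 < pr.2),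
        wedge (i (σ pr.1)) (i (σ pr.2)))

/-!
`F_n` is, up to the factor `q - q⁻¹`, the structure constant of the `n`-fold antisymmetrised product
in the quantum torus `T_m T_n = q^{m ∧ n} T_{m + n}`, an associative algebra. In any associative
algebra, antisymmetrised products of even arity satisfy the sh-Jacobi identity: in each monomial of
the nested product, the even number of factors of the outer product can be shifted cyclically. This
is an odd permutation of the factors, but it induces a cyclic shift of the odd number of letters,
which is even, so the terms cancel in pairs.
-/

section Permutations

open Equiv Equiv.Perm List

lemma sum_sign_smul_eq_zero_of_apply_mul_right {α M : Type*} [Fintype α] [DecidableEq α]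
    [AddCommGroup M] (f : Perm α → M) (g : Perm α) (hg : sign g = -1)
    (hf : ∀ ρ, f (ρ * g) = f ρ) : ∑ ρ, sign ρ • f ρ = 0 := by
  have hf' (ρ : Perm α) : f (ρ * g⁻¹) = f ρ := by rw [← hf (ρ * g⁻¹), inv_mul_cancel_right]
  -- Right translation by `g` pairs even with odd permutations, whatever the order of `g`.
  refine Finset.sum_involution (fun ρ _ ↦ if sign ρ = 1 then ρ * g else ρ * g⁻¹) ?_ ?_ ?_ ?_
  · intro ρ _
    rcases Int.units_eq_one_or (sign ρ) with h | h <;> simp [h, hg, hf, hf']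
  · intro ρ _ _ hρ
    have h := congrArg sign hρ
    rcases Int.units_eq_one_or (sign ρ) with h' | h' <;> simp [h', hg] at h
  · simp
  · intro ρ _
    rcases Int.units_eq_one_or (sign ρ) with h | h <;> simp [h, hg]

variable {ι : Type*} [DecidableEq ι]

lemma map_formPerm_self {l : List ι} (hl : l.Nodup) : l.map l.formPerm = l.rotate 1 := by
  refine ext_getElem (by simp) fun i hi _ ↦ ?_
  rw [getElem_map, getElem_rotate, formPerm_apply_getElem _ hl]

lemma sign_formPerm_of_odd_length [Fintype ι] {l : List ι} (hl : l.Nodup)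
    (hodd : Odd l.length) : sign l.formPerm = 1 := by
  have h : sign l.formPerm ^ l.length = 1 := by
    rw [← map_pow, formPerm_pow_length_eq_one_of_nodup l hl, map_one]
  rwa [Int.units_pow_eq_pow_mod_two, Nat.odd_iff.mp hodd, pow_one] at h

lemma isRotated_flatten_rotate_one {α : Type*} (L : List (List α)) :
    (L.rotate 1).flatten ~r L.flatten := by
  cases L with
  | nil => simp
  | cons l L => simpa using isRotated_append

lemma ofFn_comp_finRotate {α : Type*} {n : ℕ} (f : Fin n → α) :
    ofFn (f ∘ finRotate n) = (ofFn f).rotate 1 := by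
  cases n with
  | zero => simp
  | succ n =>
    obtain ⟨a, v, rfl⟩ : ∃ a v, f = Fin.cons a v := ⟨_, _, (Fin.cons_self_tail f).symm⟩
    have h : Fin.cons a v ∘ finRotate (n + 1) = Fin.snoc (α := fun _ ↦ α) v a :=
      (Fin.snoc_eq_cons_rotate ..).symm
    rw [h, ofFn_cons, rotate_cons_succ, rotate_zero, ofFn_succ_last]
    simp

end Permutations

section SignedWordSum

open Equiv Equiv.Perm List

variable {ι A : Type*} [Fintype ι] [DecidableEq ι] [Ring A]

/-- The noncommutative monomial spelled by the word `l`, antisymmetrised over all relabellings of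
its letters. -/
def signedWordSum (x : ι → A) (l : List ι) : A :=
  ∑ σ : Perm ι, sign σ • (l.map (x ∘ σ)).prod

lemma signedWordSum_map_perm (x : ι → A) (l : List ι) (π : Perm ι) :
    signedWordSum x (l.map π) = sign π • signedWordSum x l := by
  rw [signedWordSum, signedWordSum, ← Equiv.sum_comp (Equiv.mulRight π⁻¹), Finset.smul_sum]
  refine Finset.sum_congr rfl fun σ _ ↦ ?_
  have hx : (x ∘ ⇑(σ * π⁻¹)) ∘ π = x ∘ σ := by ext; simp
  have hsign : sign (σ * π⁻¹) = sign π * sign σ := by rw [Perm.sign_mul, sign_inv, mul_comm]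
  rw [Equiv.coe_mulRight, hsign, mul_smul, map_map, hx]

lemma signedWordSum_rotate_one (x : ι → A) {l : List ι} (hl : l.Nodup) (hodd : Odd l.length) :
    signedWordSum x (l.rotate 1) = signedWordSum x l := by
  rw [← map_formPerm_self hl, signedWordSum_map_perm, sign_formPerm_of_odd_length hl hodd, one_smul]

lemma signedWordSum_eq_of_isRotated (x : ι → A) {l l' : List ι} (h : l' ~r l) (hl : l.Nodup)
    (hodd : Odd l.length) : signedWordSum x l' = signedWordSum x l := by
  obtain ⟨n, rfl⟩ := h.symm
  clear h
  induction n with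
  | zero => rw [rotate_zero]
  | succ n ih =>
    rw [← rotate_rotate, signedWordSum_rotate_one x (nodup_rotate.mpr hl) (by simpa using hodd), ih]

lemma sum_sign_smul_signedWordSum_flatten (x : ι → A) {r : ℕ} (hr : Even r) (w : Fin r → List ι)
    (hw : (ofFn w).flatten.Nodup) (hodd : Odd (ofFn w).flatten.length) :
    ∑ ρ : Perm (Fin r), sign ρ • signedWordSum x (ofFn (w ∘ ρ)).flatten = 0 := by
  have hsign : sign (finRotate r) = -1 := by
    obtain _ | r := r
    · simp at hodd
    · rw [sign_finRotate, Nat.add_sub_cancel, Odd.neg_one_pow (by grind)]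
  refine sum_sign_smul_eq_zero_of_apply_mul_right _ (finRotate r) hsign fun ρ ↦ ?_
  have hperm : (ofFn (w ∘ ρ)).flatten ~ (ofFn w).flatten := (ρ.ofFn_comp_perm w).flatten
  have hrot : (ofFn (w ∘ ⇑(ρ * finRotate r))).flatten ~r (ofFn (w ∘ ρ)).flatten := by
    rw [coe_mul, ← Function.comp_assoc, ofFn_comp_finRotate]
    exact isRotated_flatten_rotate_one _
  exact signedWordSum_eq_of_isRotated x hrot (hperm.nodup_iff.mpr hw) (hperm.length_eq ▸ hodd)

end SignedWordSum

section AntisymmProd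

open Equiv Equiv.Perm
open Matrix (vecCons)

variable (R : Type*) {A : Type*} [CommRing R] [Ring A] [Algebra R A]

/-- The `n`-ary bracket `[x₁, …, xₙ] = ∑ σ, sgn σ • x_{σ 1} ⋯ x_{σ n}` of an associative algebra. -/
def antisymmProd (n : ℕ) : A [⋀^Fin n]→ₗ[R] A :=
  (MultilinearMap.mkPiAlgebraFin R n A).alternatization

lemma antisymmProd_apply {n : ℕ} (x : Fin n → A) :
    antisymmProd R n x = ∑ σ : Perm (Fin n), sign σ • (List.ofFn (x ∘ σ)).prod := by
  simp [antisymmProd, MultilinearMap.alternatization_apply, Function.comp_def]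

lemma antisymmProd_vecCons_antisymmProd {n m : ℕ} (y : Fin n → A) (z : Fin m → A) :
    antisymmProd R (m + 1) (vecCons (antisymmProd R n y) z) =
      ∑ τ : Perm (Fin n), sign τ • ∑ ρ : Perm (Fin (m + 1)),
        sign ρ • (List.ofFn (vecCons (List.ofFn (y ∘ τ)).prod z ∘ ρ)).prod := by
  have hcurry (P : A) : antisymmProd R (m + 1) (vecCons P z) =
      (antisymmProd R (m + 1)).toMultilinearMap.curryLeft P z := rfl
  rw [antisymmProd_apply R y, hcurry, map_sum, sum_apply]
  refine Finset.sum_congr rfl fun τ _ ↦ ?_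
  rw [Units.smul_def, map_zsmul, smul_apply, ← hcurry, antisymmProd_apply, Units.smul_def]

theorem sum_sign_smul_antisymmProd_antisymmProd {ι : Type*} [Fintype ι] [DecidableEq ι]
    {n m : ℕ} (hn : Even n) (hm : Odd m) {a : Fin n → ι} {b : Fin m → ι}
    (ha : a.Injective) (hb : b.Injective) (hab : ∀ i j, a i ≠ b j) (x : ι → A) :
    ∑ σ : Perm ι, sign σ •
      antisymmProd R (m + 1) (vecCons (antisymmProd R n (x ∘ σ ∘ a)) (x ∘ σ ∘ b)) = 0 := by
  let w (τ : Perm (Fin n)) : Fin (m + 1) → List ι :=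
    vecCons (List.ofFn (a ∘ τ)) fun j ↦ [b j]
  have hword (σ : Perm ι) (τ : Perm (Fin n)) (ρ : Perm (Fin (m + 1))) :
      (List.ofFn (vecCons (List.ofFn ((x ∘ σ ∘ a) ∘ τ)).prod (x ∘ σ ∘ b) ∘ ρ)).prod =
        ((List.ofFn (w τ ∘ ρ)).flatten.map (x ∘ σ)).prod := by
    have hblock (i : Fin (m + 1)) : ((w τ i).map (x ∘ σ)).prod =
        vecCons (List.ofFn ((x ∘ σ ∘ a) ∘ τ)).prod (x ∘ σ ∘ b) i := by
      cases i using Fin.cases <;> simp [w, Function.comp_def, List.map_ofFn]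
    rw [List.map_flatten, List.prod_flatten, List.map_map, List.map_ofFn]
    exact congrArg (fun f ↦ (List.ofFn f).prod) (funext fun i ↦ (hblock (ρ i)).symm)
  have hflatten (τ : Perm (Fin n)) :
      (List.ofFn (w τ)).flatten = List.ofFn (a ∘ τ) ++ List.ofFn b := by
    have hsingletons : (List.ofFn fun j ↦ [b j]).flatten = List.ofFn b := by
      rw [← List.flatMap_singleton' (List.ofFn b), List.flatMap_def, List.map_ofFn,
        Function.comp_def]
    simp [w, List.ofFn_succ, hsingletons]
  calc
    _ = ∑ τ : Perm (Fin n), sign τ • ∑ ρ : Perm (Fin (m + 1)),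
          sign ρ • signedWordSum x (List.ofFn (w τ ∘ ρ)).flatten := by
      simp only [antisymmProd_vecCons_antisymmProd, hword, signedWordSum, Finset.smul_sum]
      rw [Finset.sum_comm]
      refine Finset.sum_congr rfl fun τ _ ↦ ?_
      rw [Finset.sum_comm]
      simp only [smul_comm (sign (_ : Perm ι))]
    _ = 0 := by
      refine Finset.sum_eq_zero fun τ _ ↦ ?_
      rw [sum_sign_smul_signedWordSum_flatten x hm.add_one (w τ), smul_zero]
      · rw [hflatten]
        simpa [List.nodup_append, List.nodup_ofFn, ha.comp τ.injective, hb] using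
          fun i j ↦ hab (τ i) j
      · rw [hflatten]
        simpa using hn.add_odd hm

end AntisymmProd

section MagneticTranslation

open Finset

lemma wedge_sum_right {ι : Type*} (s : Finset ι) (m : ℤ × ℤ) (f : ι → ℤ × ℤ) :
    wedge m (∑ t ∈ s, f t) = ∑ t ∈ s, wedge m (f t) := by
  simp [wedge, Prod.fst_sum, Prod.snd_sum, mul_sum]

variable {K : Type*} [Field K]

/-- The magnetic translation `T_m` on functions on the lattice, `(T_m f)(x) = q^{m ∧ x} f(x - m)`.
These operators represent the quantum torus `T_m T_n = q^{m ∧ n} T_{m + n}`. -/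
def magneticTranslation (q : K) (m : ℤ × ℤ) : Module.End K (ℤ × ℤ → K) where
  toFun f x := q ^ wedge m x * f (x - m)
  map_add' f g := by ext; simp [mul_add]
  map_smul' c f := by ext; simp [mul_left_comm]

lemma magneticTranslation_apply (q : K) (m : ℤ × ℤ) (f : ℤ × ℤ → K) (x : ℤ × ℤ) :
    magneticTranslation q m f x = q ^ wedge m x * f (x - m) := rfl

lemma magneticTranslation_zero (q : K) : magneticTranslation q 0 = 1 := by
  ext f x
  simp [magneticTranslation_apply, wedge]

lemma magneticTranslation_one_zero (q : K) (m : ℤ × ℤ) : magneticTranslation q m 1 0 = 1 := by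
  simp [magneticTranslation_apply, wedge]

lemma magneticTranslation_mul {q : K} (hq : q ≠ 0) (m n : ℤ × ℤ) :
    magneticTranslation q m * magneticTranslation q n =
      q ^ wedge m n • magneticTranslation q (m + n) := by
  refine LinearMap.ext fun f ↦ funext fun x ↦ ?_
  have hexp : wedge m x + wedge n (x - m) = wedge m n + wedge (m + n) x := by
    simp only [wedge, Prod.fst_add, Prod.snd_add, Prod.fst_sub, Prod.snd_sub]
    ring
  simp only [Module.End.mul_apply, LinearMap.smul_apply, Pi.smul_apply, smul_eq_mul,
    magneticTranslation_apply, ← mul_assoc, ← zpow_add₀ hq, hexp, sub_sub]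

lemma sum_filter_lt_wedge_succ {n : ℕ} (i : Fin (n + 1) → ℤ × ℤ) :
    ∑ p : Fin (n + 1) × Fin (n + 1) with p.1 < p.2, wedge (i p.1) (i p.2) =
      wedge (i 0) (∑ t : Fin n, i t.succ) +
        ∑ p : Fin n × Fin n with p.1 < p.2, wedge (i p.1.succ) (i p.2.succ) := by
  simp [sum_filter, Fintype.sum_prod_type, Fin.sum_univ_succ, wedge_sum_right]

lemma prod_ofFn_magneticTranslation {q : K} (hq : q ≠ 0) {n : ℕ} (i : Fin n → ℤ × ℤ) :
    (List.ofFn fun t ↦ magneticTranslation q (i t)).prod =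
      q ^ (∑ p : Fin n × Fin n with p.1 < p.2, wedge (i p.1) (i p.2)) •
        magneticTranslation q (∑ t, i t) := by
  induction n with
  | zero => simp [magneticTranslation_zero]
  | succ n ih =>
    rw [List.ofFn_succ, List.prod_cons, ih, mul_smul_comm, magneticTranslation_mul hq, smul_smul,
      ← zpow_add₀ hq, sum_filter_lt_wedge_succ, Fin.sum_univ_succ, add_comm (wedge _ _)]

lemma sub_inv_ne_zero_of_sq_ne_one {q : K} (hq : q ≠ 0) (hq2 : q ^ 2 ≠ 1) :
    q - q⁻¹ ≠ 0 := by
  intro h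
  apply hq2
  field_simp at h
  linear_combination h

lemma antisymmProd_magneticTranslation {q : ℂ} (hq : q ≠ 0) (hq2 : q ^ 2 ≠ 1) {n : ℕ}
    (i : Fin n → ℤ × ℤ) :
    antisymmProd ℂ n (magneticTranslation q ∘ i) =
      ((q - q⁻¹) * Fsd q n i) • magneticTranslation q (∑ t, i t) := by
  rw [Fsd, mul_inv_cancel_left₀ (sub_inv_ne_zero_of_sq_ne_one hq hq2), antisymmProd_apply, sum_smul]
  refine sum_congr rfl fun σ _ ↦ ?_
  have hprod := prod_ofFn_magneticTranslation hq (i ∘ σ)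
  simp only [Function.comp_apply, Equiv.sum_comp σ i] at hprod
  rw [mul_smul, ← hprod, Units.smul_def, Int.cast_smul_eq_zsmul]
  rfl

lemma antisymmProd_vecCons_magneticTranslation {q : ℂ} (hq : q ≠ 0) (hq2 : q ^ 2 ≠ 1)
    {n m : ℕ} (i : Fin n → ℤ × ℤ) (j : Fin m → ℤ × ℤ) :
    antisymmProd ℂ (m + 1) (Matrix.vecCons
        (antisymmProd ℂ n (magneticTranslation q ∘ i)) (magneticTranslation q ∘ j)) =
      ((q - q⁻¹) ^ 2 * (Fsd q n i * Fsd q (m + 1) (Matrix.vecCons (∑ t, i t) j))) •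
        magneticTranslation q (∑ t, i t + ∑ t, j t) := by
  have hcons : Matrix.vecCons (magneticTranslation q (∑ t, i t)) (magneticTranslation q ∘ j) =
      magneticTranslation q ∘ Matrix.vecCons (∑ t, i t) j := (Fin.comp_cons ..).symm
  rw [antisymmProd_magneticTranslation hq hq2, AlternatingMap.map_vecCons_smul, hcons,
    antisymmProd_magneticTranslation hq hq2, smul_smul, Fin.sum_univ_succ]
  simp only [Matrix.cons_val_zero, Matrix.cons_val_succ]
  congr 1
  ring

end MagneticTranslation

lemma ite_val_eq_zero_eq_vecCons {α : Type*} {m : ℕ} (p : α) (f : Fin (m + 1) → α) :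
    (fun j : Fin (m + 1) ↦ if (j : ℕ) = 0 then p else f j) =
      Matrix.vecCons p fun j : Fin m ↦ f j.succ := by
  ext j
  cases j using Fin.cases <;> simp

theorem stmt19_general {q : ℂ} (hq : q ≠ 0) (hq2 : q ^ 2 ≠ 1) {ι : Type*} [Fintype ι]
    [DecidableEq ι] {n m : ℕ} (hn : Even n) (hm : Odd m) {a : Fin n → ι} {b : Fin m → ι}
    (ha : a.Injective) (hb : b.Injective) (hab : ∀ i j, a i ≠ b j) (k : ι → ℤ × ℤ) :
    ∑ σ : Equiv.Perm ι, ((Equiv.Perm.sign σ : ℤ) : ℂ) *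
      (Fsd q n (k ∘ σ ∘ a) *
        Fsd q (m + 1) (Matrix.vecCons (∑ t, k (σ (a t))) (k ∘ σ ∘ b))) = 0 := by
  refine (mul_eq_zero.mp ?_).resolve_left (pow_ne_zero 2 (sub_inv_ne_zero_of_sq_ne_one hq hq2))
  -- Every `T_m` maps the function `1` to one with value `1` at `0`, so evaluating the operator
  -- identity there reads off the scalar coefficients.
  calc
    _ = (∑ σ : Equiv.Perm ι, Equiv.Perm.sign σ • antisymmProd ℂ (m + 1) (Matrix.vecCons
          (antisymmProd ℂ n (magneticTranslation q ∘ k ∘ σ ∘ a))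
          (magneticTranslation q ∘ k ∘ σ ∘ b))) 1 0 := by
      simp only [antisymmProd_vecCons_magneticTranslation hq hq2, Function.comp_apply,
        Units.smul_def, ← Int.cast_smul_eq_zsmul ℂ, LinearMap.sum_apply, Finset.sum_apply,
        LinearMap.smul_apply, Pi.smul_apply, magneticTranslation_one_zero, smul_eq_mul, mul_one,
        mul_left_comm _ ((q - q⁻¹) ^ 2), ← Finset.mul_sum]
    _ = 0 := by
      have hjacobi := sum_sign_smul_antisymmProd_antisymmProd ℂ hn hm ha hb hab
        (magneticTranslation q ∘ k)
      simp only [Function.comp_assoc] at hjacobi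
      rw [hjacobi, LinearMap.zero_apply, Pi.zero_apply]

/-- for even `n ≥ 2` the fully antisymmetrized sh-Jacobi sum of the
structure constants of the q-deformed SDiff(T²) n-algebra vanishes, i.e. for even `n`
the q-deformed SDiff(T²) n-algebra is a sh-n-Lie algebra. -/
theorem stmt19 (q : ℂ) (hq : q ≠ 0) (hq2 : q ^ 2 ≠ 1) (n : ℕ) (hn : 2 ≤ n)
    (hev : Even n) (k : Fin (2 * n - 1) → ℤ × ℤ) :
    ∑ σ : Equiv.Perm (Fin (2 * n - 1)), ((Equiv.Perm.sign σ : ℤ) : ℂ) *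
      (Fsd q n (fun j => k (σ (Fin.castLE (by omega) j))) *
        Fsd q n (fun j => if (j : ℕ) = 0
          then ∑ t : Fin n, k (σ (Fin.castLE (by omega) t))
          else k (σ ⟨n + (j : ℕ) - 1, by have := j.isLt; omega⟩))) = 0 := by
  obtain ⟨m, rfl⟩ := Nat.exists_eq_add_one_of_ne_zero (by omega : n ≠ 0)
  have hb : (fun j : Fin m ↦
      (⟨m + 1 + (j.succ : ℕ) - 1, by grind⟩ : Fin (2 * (m + 1) - 1))).Injective :=
    fun i j h ↦ by grind
  simp_rw [ite_val_eq_zero_eq_vecCons]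
  exact stmt19_general hq hq2 hev (by grind) (Fin.castLE_injective _) hb
    (fun i j ↦ Fin.ne_of_val_ne (by grind)) k
end
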